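/- arXiv:math/9905125 — 2 statements merged into one kernel-verified Lean document; each statement's English description precedes it below -/
import Mathlib

section
/- Assume k is algebraically closed. Let E = {Z_1,…,Z_r} be pairwise non-proportional homogeneous linear forms in S that are generic, i.e. every subset of E with at most n elements is linearly independent, and suppose each Q_j ∈ 𝒜 has the form Q_j = ∏_{i=1}^r Z_i^{a_{ij}} for nonnegative integers a_{ij}. Let S̃ = k[y_1,…,y_r], let Q̃_j = ∏_{i=1}^r y_i^{a_{ij}}, and let Ĩ ⊆ S̃ be the ideal generated by Q̃_1,…,Q̃_m. Then the Taylor complex of 𝒜 is a resolution of S/I if and only if Tor_p^{S̃}(S̃/Ĩ, k) = 0 for all p ≥ n+1, where k is regarded as the S̃-module S̃/(y_1,…,y_r). -/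
open Finset

noncomputable section

/-- Degree-`p` term of the Taylor complex: the free `S`-module on the `p`-element
subsets of the index set `Fin m`. -/
abbrev TaylorMod (k : Type) [Field k] (n m p : ℕ) : Type :=
  {σ : Finset (Fin m) // σ.card = p} →₀ MvPolynomial (Fin n) k

/-- The Taylor differential, sending a `p`-element subset `σ` to
`∑_{i ∈ σ} (-1)^{ε(σ,i)} (Q_σ / Q_{σ∖{i}}) (σ∖{i})`, where `c σ i` is the quotient
`Q_σ / Q_{σ∖{i}}`. -/
def taylorD (k : Type) [Field k] (n m : ℕ)
    (c : Finset (Fin m) → Fin m → MvPolynomial (Fin n) k) (p : ℕ) :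
    TaylorMod k n m p →ₗ[MvPolynomial (Fin n) k] TaylorMod k n m (p - 1) :=
  Finsupp.lsum (MvPolynomial (Fin n) k) fun σ =>
    LinearMap.toSpanSingleton _ _
      (∑ i ∈ σ.1.attach,
        Finsupp.single
          ⟨σ.1.erase i.1, by rw [Finset.card_erase_of_mem i.2, σ.2]⟩
          ((-1) ^ (σ.1.filter (fun j => j < i.1)).card * c σ.1 i.1))

/-- The identification of the degree-`0` term of the Taylor complex with `S`. -/
def taylorAug (k : Type) [Field k] (n m : ℕ) :
    TaylorMod k n m 0 →ₗ[MvPolynomial (Fin n) k] MvPolynomial (Fin n) k :=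
  Finsupp.lsum (MvPolynomial (Fin n) k) fun _ => LinearMap.id

/-- The Taylor complex (built from the quotient data `c`) is a resolution of `S/I`:
it is exact in all degrees `p ≥ 1` and the image of its first differential is the
ideal generated by `Q`. -/
def IsTaylorResolution (k : Type) [Field k] (n m : ℕ) (Q : Fin m → MvPolynomial (Fin n) k)
    (c : Finset (Fin m) → Fin m → MvPolynomial (Fin n) k) : Prop :=
  (∀ p : ℕ, 1 ≤ p →
      LinearMap.ker (taylorD k n m c p) = LinearMap.range (taylorD k n m c (p + 1))) ∧
  Submodule.map (taylorAug k n m) (LinearMap.range (taylorD k n m c 1)) =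
    Ideal.span (Set.range Q)

end


/-! ### The combinatorial complex -/

namespace TaylorAux

open Finset

/-- The sign attached to inserting `i` into `τ`. -/
def sg {m : ℕ} (τ : Finset (Fin m)) (i : Fin m) : ℤ := (-1) ^ (τ.filter (fun j => j < i)).card

lemma sg_mul_self {m : ℕ} (τ : Finset (Fin m)) (i : Fin m) : sg τ i * sg τ i = 1 := by
  unfold sg
  rw [← mul_pow]; simp

lemma sg_insert {m : ℕ} (τ : Finset (Fin m)) (i j : Fin m) (hi : i ∉ τ) :
    sg (insert i τ) j = if i < j then - sg τ j else sg τ j := by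
  unfold sg
  rw [Finset.filter_insert]
  split_ifs with h
  · rw [Finset.card_insert_of_notMem (by simp [hi]), pow_succ]; ring
  · rfl

lemma sg_swap {m : ℕ} (τ : Finset (Fin m)) (i j : Fin m) (hi : i ∉ τ) (hj : j ∉ τ) (hij : i ≠ j) :
    sg τ i * sg (insert i τ) j = - (sg τ j * sg (insert j τ) i) := by
  rw [sg_insert _ _ _ hi, sg_insert _ _ _ hj]
  rcases lt_or_gt_of_ne hij with h | h
  · rw [if_pos h, if_neg h.asymm]; ring
  · rw [if_neg h.asymm, if_pos h]; ring

lemma sg_swap' {m : ℕ} (τ : Finset (Fin m)) (i j : Fin m) (hi : i ∉ τ) (hj : j ∉ τ) (hij : i ≠ j) :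
    sg (insert j τ) i * sg (insert i τ) j = - (sg τ j * sg τ i) := by
  have h := sg_swap τ i j hi hj hij
  have h1 := sg_mul_self τ i
  have h2 := sg_mul_self (insert j τ) i
  calc sg (insert j τ) i * sg (insert i τ) j
      = sg (insert j τ) i * (sg τ i * sg τ i) * sg (insert i τ) j := by rw [h1, mul_one]
    _ = sg (insert j τ) i * sg τ i * (sg τ i * sg (insert i τ) j) := by ring
    _ = - (sg τ j * sg τ i) * (sg (insert j τ) i * sg (insert j τ) i) := by rw [h]; ring
    _ = _ := by rw [h2, mul_one]

section basic

variable {m : ℕ} {R : Type*} [CommRing R] (c : Finset (Fin m) → Fin m → R)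
  {N : Type*} [AddCommGroup N] [Module R N]

/-- The Taylor differential on all functions from subsets to a module. -/
def dT (N : Type*) [AddCommGroup N] [Module R N] :
    (Finset (Fin m) → N) →+ (Finset (Fin m) → N) where
  toFun f τ := ∑ i ∈ τᶜ, sg τ i • (c (insert i τ) i • f (insert i τ))
  map_zero' := by ext τ; simp
  map_add' f g := by ext τ; simp [Finset.sum_add_distrib]

lemma dT_apply (f : Finset (Fin m) → N) (τ : Finset (Fin m)) :
    dT c N f τ = ∑ i ∈ τᶜ, sg τ i • (c (insert i τ) i • f (insert i τ)) := rfl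

/-- `f` is concentrated on subsets of cardinality `p`. -/
def Supp (p : ℕ) (f : Finset (Fin m) → N) : Prop := ∀ σ, σ.card ≠ p → f σ = 0

/-- Exactness of the complex in degree `p`. -/
def Ex (N : Type*) [AddCommGroup N] [Module R N] (p : ℕ) : Prop :=
  ∀ f : Finset (Fin m) → N, Supp p f → dT c N f = 0 → ∃ g, dT c N g = f

/-- Truncation to cardinality `p`. -/
def tr (p : ℕ) (f : Finset (Fin m) → N) : Finset (Fin m) → N :=
  fun σ => if σ.card = p then f σ else 0

lemma supp_tr (p : ℕ) (f : Finset (Fin m) → N) : Supp p (tr p f) := by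
  intro σ h; simp [tr, h]

lemma tr_of_supp {p : ℕ} {f : Finset (Fin m) → N} (h : Supp p f) : tr p f = f := by
  ext σ
  unfold tr
  split_ifs with h1
  · rfl
  · exact (h σ h1).symm

lemma dT_tr (p : ℕ) (f : Finset (Fin m) → N) : dT c N (tr (p + 1) f) = tr p (dT c N f) := by
  ext τ
  have : ∀ i ∈ τᶜ, (insert i τ).card = τ.card + 1 := fun i hi =>
    Finset.card_insert_of_notMem (by simpa using hi)
  by_cases h : τ.card = p
  · simp only [tr, h, if_true, dT_apply]
    refine Finset.sum_congr rfl fun i hi => ?_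
    rw [if_pos (by rw [this i hi, h])]
  · simp only [tr, h, if_false, dT_apply]
    refine Finset.sum_eq_zero fun i hi => ?_
    rw [if_neg (by rw [this i hi]; omega)]; simp

lemma supp_dT {p : ℕ} {f : Finset (Fin m) → N} (h : Supp (p + 1) f) : Supp p (dT c N f) := by
  rw [← tr_of_supp h, dT_tr]; exact supp_tr _ _

lemma Ex.exists_supp {p : ℕ} (h : Ex c N p) {f : Finset (Fin m) → N} (hf : Supp p f)
    (hd : dT c N f = 0) : ∃ g, Supp (p + 1) g ∧ dT c N g = f := by
  obtain ⟨g, hg⟩ := h f hf hd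
  exact ⟨tr (p + 1) g, supp_tr _ _, by rw [dT_tr, hg, tr_of_supp hf]⟩

lemma ex_of_gt (p : ℕ) (hp : m < p) : Ex c N p := by
  intro f hf _
  refine ⟨0, ?_⟩
  ext σ
  rw [hf σ]
  · simp
  · have := Finset.card_le_univ σ
    simp at this; omega

lemma dT_map {R' : Type*} [CommRing R'] (c' : Finset (Fin m) → Fin m → R')
    {N' : Type*} [AddCommGroup N'] [Module R' N'] (e : N →+ N')
    (he : ∀ σ i x, e (c σ i • x) = c' σ i • e x) (f : Finset (Fin m) → N) :
    dT c' N' (fun σ => e (f σ)) = fun σ => e (dT c N f σ) := by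
  ext τ
  simp [dT_apply, he]

lemma dT_lin {N' : Type*} [AddCommGroup N'] [Module R N'] (e : N →ₗ[R] N')
    (f : Finset (Fin m) → N) :
    dT c N' (fun σ => e (f σ)) = fun σ => e (dT c N f σ) :=
  dT_map c c e.toAddMonoidHom (by simp) f

lemma dT_smul (x : R) (f : Finset (Fin m) → N) : dT c N (x • f) = x • dT c N f :=
  dT_lin c (LinearMap.lsmul R N x) f

/-- Rescaling. -/
lemma dT_rescale (c' : Finset (Fin m) → Fin m → R) (u : Finset (Fin m) → R)
    (h : ∀ τ, ∀ i ∉ τ, c' (insert i τ) i * u (insert i τ) = u τ * c (insert i τ) i)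
    (f : Finset (Fin m) → N) :
    dT c' N (fun σ => u σ • f σ) = fun σ => u σ • dT c N f σ := by
  ext τ
  simp only [dT_apply, Finset.smul_sum]
  refine Finset.sum_congr rfl fun i hi => ?_
  rw [smul_smul, h τ i (by simpa using hi), mul_smul,
    smul_comm (u τ) (sg τ i)]

lemma Ex.of_equiv {p : ℕ} {R' : Type*} [CommRing R'] (c' : Finset (Fin m) → Fin m → R')
    {N' : Type*} [AddCommGroup N'] [Module R' N'] (e : N ≃+ N')
    (he : ∀ σ i x, e (c σ i • x) = c' σ i • e x) (h : Ex c N p) : Ex c' N' p := by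
  intro f hf hd
  have he' : ∀ σ i x, e.symm (c' σ i • x) = c σ i • e.symm x := by
    intro σ i x
    apply e.injective
    rw [he]; simp
  obtain ⟨g, hg⟩ := h (fun σ => e.symm (f σ)) (fun σ hσ => by simp only; rw [hf σ hσ, map_zero])
    (by
      have := dT_map c' c e.symm.toAddMonoidHom he' f
      simp only [AddEquiv.toAddMonoidHom_eq_coe, AddMonoidHom.coe_coe] at this
      rw [this, hd]; ext; simp)
  refine ⟨fun σ => e (g σ), ?_⟩
  have := dT_map c c' e.toAddMonoidHom he g
  simp only [AddEquiv.toAddMonoidHom_eq_coe, AddMonoidHom.coe_coe] at this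
  rw [this, hg]; ext; simp

lemma ex_equiv_iff {p : ℕ} {R' : Type*} [CommRing R'] (c' : Finset (Fin m) → Fin m → R')
    {N' : Type*} [AddCommGroup N'] [Module R' N'] (e : N ≃+ N')
    (he : ∀ σ i x, e (c σ i • x) = c' σ i • e x) : Ex c N p ↔ Ex c' N' p := by
  refine ⟨Ex.of_equiv c c' e he, Ex.of_equiv c' c e.symm ?_⟩
  intro σ i x
  apply e.injective
  rw [he]; simp

lemma ex_rescale (c' : Finset (Fin m) → Fin m → R) (u : Finset (Fin m) → R)
    (hu : ∀ σ, IsUnit (u σ))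
    (h : ∀ τ, ∀ i ∉ τ, c' (insert i τ) i * u (insert i τ) = u τ * c (insert i τ) i)
    {p : ℕ} (hex : Ex c' N p) : Ex c N p := by
  intro f hf hd
  obtain ⟨g, hg⟩ := hex (fun σ => u σ • f σ) (fun σ hσ => by simp only; rw [hf σ hσ, smul_zero])
    (by rw [dT_rescale c c' u h, hd]; ext; simp)
  choose v hv using fun σ => (hu σ).exists_left_inv
  refine ⟨fun σ => v σ • g σ, ?_⟩
  have h2 := dT_rescale c c' u h (fun σ => v σ • g σ)
  have h3 : (fun σ => u σ • v σ • g σ) = g := by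
    ext σ; rw [smul_smul, mul_comm, hv, one_smul]
  rw [h3, hg] at h2
  ext σ
  have h4 := congrFun h2 σ
  have h5 := congrArg (fun x => v σ • x) h4
  simp only [smul_smul, hv, one_smul] at h5
  exact h5.symm

/-- The commutation condition for the coefficients that gives `d ∘ d = 0`. -/
def Comm (c : Finset (Fin m) → Fin m → R) : Prop :=
  ∀ τ i j, i ∉ τ → j ∉ τ → i ≠ j →
    c (insert i τ) i * c (insert j (insert i τ)) j = c (insert j τ) j * c (insert i (insert j τ)) i

lemma dT_dT (hc : Comm c) (f : Finset (Fin m) → N) : dT c N (dT c N f) = 0 := by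
  ext τ
  simp only [dT_apply, Finset.smul_sum, Pi.zero_apply]
  rw [Finset.sum_sigma']
  refine Finset.sum_involution (fun x _ => ⟨x.2, x.1⟩) ?_ ?_ ?_ ?_
  · rintro ⟨i, j⟩ hx
    simp only [mem_sigma, mem_compl, mem_insert, not_or] at hx
    obtain ⟨hi, hji, hj⟩ := hx
    simp only
    rw [smul_comm (c (insert i τ) i), smul_comm (c (insert j τ) j), smul_smul, smul_smul,
      smul_smul, smul_smul, hc τ i j hi hj (Ne.symm hji), sg_swap τ i j hi hj (Ne.symm hji),
      Finset.insert_comm j i, neg_smul, neg_add_cancel]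
  · rintro ⟨i, j⟩ hx _
    simp only [mem_sigma, mem_compl, mem_insert, not_or] at hx
    intro h
    simp only [Sigma.mk.injEq] at h
    exact hx.2.1 h.1
  · rintro ⟨i, j⟩ hx
    simp only [mem_sigma, mem_compl, mem_insert, not_or] at hx ⊢
    exact ⟨hx.2.2, Ne.symm hx.2.1, hx.1⟩
  · rintro ⟨i, j⟩ hx; rfl

end basic

/-- The contracting homotopy for the simplex. -/
lemma plain_exact {m : ℕ} {N : Type*} [AddCommGroup N] (j : Fin m) (F : Finset (Fin m) → N)
    (hF : ∀ τ, ∑ i ∈ τᶜ, sg τ i • F (insert i τ) = 0) (τ : Finset (Fin m)) :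
    ∑ i ∈ τᶜ, sg τ i • (if j ∈ insert i τ then
      sg ((insert i τ).erase j) j • F ((insert i τ).erase j) else 0) = F τ := by
  by_cases hj : j ∈ τ
  · obtain ⟨ρ, hρ, rfl⟩ : ∃ ρ, j ∉ ρ ∧ insert j ρ = τ :=
      ⟨τ.erase j, by simp, Finset.insert_erase hj⟩
    have h1 := hF ρ
    have h2 : ρᶜ = insert j ((insert j ρ)ᶜ) := by
      ext x; simp only [mem_compl, mem_insert, not_or]
      by_cases hx : x = j
      · subst hx; simp [hρ]
      · simp [hx]
    rw [h2, Finset.sum_insert (by simp)] at h1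
    have h3 : ∀ i ∈ (insert j ρ)ᶜ, sg (insert j ρ) i • (if j ∈ insert i (insert j ρ) then
      sg ((insert i (insert j ρ)).erase j) j • F ((insert i (insert j ρ)).erase j) else 0)
        = - (sg ρ j • (sg ρ i • F (insert i ρ))) := by
      intro i hi
      simp only [mem_compl, mem_insert, not_or] at hi
      have h4 : (insert i (insert j ρ)).erase j = insert i ρ := by
        rw [Finset.insert_comm, Finset.erase_insert (by simp [hρ, Ne.symm hi.1])]
      rw [if_pos (by simp), h4, smul_smul, sg_swap' ρ i j hi.2 hρ hi.1, neg_smul, mul_smul]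
    rw [Finset.sum_congr rfl h3, Finset.sum_neg_distrib, ← Finset.smul_sum,
      eq_neg_of_add_eq_zero_right h1, smul_neg, neg_neg, smul_smul, sg_mul_self, one_smul]
  · rw [Finset.sum_eq_single j]
    · rw [if_pos (by simp), Finset.erase_insert hj, smul_smul, sg_mul_self, one_smul]
    · intro i _ hij
      rw [if_neg (by simp [Ne.symm hij, hj]), smul_zero]
    · intro h; simp [hj] at h

section ses

variable {m : ℕ} {R : Type*} [CommRing R] (c : Finset (Fin m) → Fin m → R)
  {N₁ N₂ N₃ : Type*} [AddCommGroup N₁] [Module R N₁] [AddCommGroup N₂] [Module R N₂]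
  [AddCommGroup N₃] [Module R N₃] (α : N₁ →ₗ[R] N₂) (β : N₂ →ₗ[R] N₃)

lemma lift_fun (hβ : Function.Surjective β) {p : ℕ} {f : Finset (Fin m) → N₃} (hf : Supp p f) :
    ∃ F : Finset (Fin m) → N₂, Supp p F ∧ (fun σ => β (F σ)) = f := by
  choose s hs using hβ
  refine ⟨tr p (fun σ => s (f σ)), supp_tr _ _, ?_⟩
  ext σ
  simp only [tr]
  split_ifs with h
  · rw [hs]
  · rw [map_zero, hf σ h]

lemma lift_ker (hα : Function.Injective α) (hex : Function.Exact α β) {p : ℕ}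
    {f : Finset (Fin m) → N₂} (hf : Supp p f) (hz : ∀ σ, β (f σ) = 0) :
    ∃ F : Finset (Fin m) → N₁, Supp p F ∧ (fun σ => α (F σ)) = f := by
  choose F hF using fun σ => (hex (f σ)).1 (hz σ)
  refine ⟨F, fun σ hσ => hα ?_, funext hF⟩
  rw [hF, hf σ hσ, map_zero]

lemma ses_a (hc : Comm c) (hα : Function.Injective α) (hβ : Function.Surjective β)
    (hex : Function.Exact α β) {p : ℕ} (h2 : Ex c N₂ (p + 1)) (h1 : Ex c N₁ p) :
    Ex c N₃ (p + 1) := by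
  intro f hf hd
  obtain ⟨F, hFs, hF⟩ := lift_fun β hβ hf
  have hFz : ∀ σ, β (dT c N₂ F σ) = 0 := by
    intro σ
    have := dT_lin c β F
    rw [hF, hd] at this
    exact (congrFun this σ).symm
  obtain ⟨G, hGs, hG⟩ := lift_ker α β hα hex (supp_dT c hFs) hFz
  have hGd : dT c N₁ G = 0 := by
    have := dT_lin c α G
    rw [hG, dT_dT c hc] at this
    ext σ
    apply hα
    rw [← congrFun this σ]; simp
  obtain ⟨H, hHs, hH⟩ := h1.exists_supp c hGs hGd
  have hH2 : dT c N₂ (fun σ => α (H σ)) = dT c N₂ F := by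
    rw [dT_lin c α H, hH, hG]
  obtain ⟨K, hK⟩ := h2 (F - fun σ => α (H σ))
    (fun σ hσ => by simp [hFs σ hσ, hHs σ hσ]) (by rw [map_sub, hH2, sub_self])
  refine ⟨fun σ => β (K σ), ?_⟩
  rw [dT_lin, hK, ← hF]
  ext σ
  simp [hex.apply_apply_eq_zero]

lemma ses_b (hc : Comm c) (hα : Function.Injective α) (hβ : Function.Surjective β)
    (hex : Function.Exact α β) {p : ℕ} (h2 : Ex c N₂ p) (h3 : Ex c N₃ (p + 1)) :
    Ex c N₁ p := by
  intro f hf hd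
  obtain ⟨G, hGs, hG⟩ := h2.exists_supp c (f := fun σ => α (f σ))
    (fun σ hσ => by simp [hf σ hσ]) (by rw [dT_lin, hd]; ext; simp)
  obtain ⟨H, hH⟩ := h3 (fun σ => β (G σ)) (fun σ hσ => by simp [hGs σ hσ])
    (by rw [dT_lin, hG]; ext σ; simp [hex.apply_apply_eq_zero])
  obtain ⟨H', hH's, hH'⟩ := lift_fun β hβ (supp_tr (p + 2) H)
  have e1 : dT c N₃ (tr (p + 2) H) = fun σ => β (G σ) := by
    rw [dT_tr, hH]; exact tr_of_supp (fun σ hσ => by simp [hGs σ hσ])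
  have e2 : ∀ σ, β ((G - dT c N₂ H') σ) = 0 := by
    intro σ
    have := congrFun (dT_lin c β H') σ
    rw [hH', e1] at this
    simp [← this]
  obtain ⟨K, hKs, hK⟩ := lift_ker (p := p + 1) α β hα hex (f := G - dT c N₂ H')
    (fun σ hσ => by simp [hGs σ hσ, supp_dT c hH's σ hσ]) e2
  refine ⟨K, ?_⟩
  have e3 := dT_lin c α K
  rw [hK, map_sub, dT_dT c hc, sub_zero, hG] at e3
  ext σ
  exact hα (congrFun e3 σ).symm

/-- The part of the homology in degree `q` killed by all `x l` vanishes. -/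
def Soc {n : ℕ} (x : Fin n → R) (N : Type*) [AddCommGroup N] [Module R N] (q : ℕ) : Prop :=
  ∀ f : Finset (Fin m) → N, Supp q f → dT c N f = 0 →
    (∀ l, ∃ g, dT c N g = x l • f) → ∃ g, dT c N g = f

lemma soc_step {n : ℕ} (x : Fin n → R) (j : Fin n) (hc : Comm c)
    (β : N₁ →ₗ[R] N₃)
    (hα : Function.Injective (fun y : N₁ => x j • y)) (hβ : Function.Surjective β)
    (hex : ∀ y, β y = 0 ↔ ∃ z, x j • z = y) {q : ℕ} (h1 : Ex c N₁ (q + 1))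
    (h3 : Soc c x N₃ (q + 1)) : Soc c x N₁ q := by
  intro f hf hd hx
  choose g' hg' using hx
  let g := fun l => tr (q + 1) (g' l)
  have hgs : ∀ l, Supp (q + 1) (g l) := fun l => supp_tr _ _
  have hg : ∀ l, dT c N₁ (g l) = x l • f := by
    intro l
    simp only [g]
    rw [dT_tr, hg' l]
    exact tr_of_supp (fun σ hσ => by simp [hf σ hσ])
  have hβx : ∀ y, β (x j • y) = 0 := fun y => (hex _).2 ⟨y, rfl⟩
  obtain ⟨u, hu⟩ := h3 (fun σ => β (g j σ)) (fun σ hσ => by simp [hgs j σ hσ])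
    (by rw [dT_lin, hg]; ext σ; simp only [Pi.smul_apply, hβx, Pi.zero_apply])
    (by
      intro l
      obtain ⟨h, hh⟩ := h1 (x l • g j - x j • g l)
        (fun σ hσ => by simp [hgs _ σ hσ])
        (by rw [map_sub, dT_smul, dT_smul, hg, hg, smul_comm, sub_self])
      refine ⟨fun σ => β (h σ), ?_⟩
      rw [dT_lin, hh]
      ext σ
      simp only [Pi.sub_apply, Pi.smul_apply, map_sub, hβx, sub_zero, map_smul])
  obtain ⟨u', -, hu'⟩ := lift_fun β hβ (supp_tr (q + 2) u)
  have e1 : dT c N₃ (tr (q + 2) u) = fun σ => β (g j σ) := by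
    rw [dT_tr, hu]; exact tr_of_supp (fun σ hσ => by simp [hgs j σ hσ])
  have e2 : ∀ σ, β ((g j - dT c N₁ u') σ) = 0 := by
    intro σ
    have := congrFun (dT_lin c β u') σ
    rw [hu', e1] at this
    simp [← this]
  choose v hv using fun σ => (hex _).1 (e2 σ)
  refine ⟨v, ?_⟩
  have e3 : x j • v = g j - dT c N₁ u' := funext hv
  have e4 := congrArg (dT c N₁) e3
  rw [dT_smul, map_sub, dT_dT c hc, sub_zero, hg] at e4
  ext σ
  exact hα (congrFun e4 σ)

end ses

section mono

variable {ι : Type*} {m : ℕ} {R : Type*} [CommRing R]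

/-- The product of the `Z t ^ (max_{j ∈ σ} a t j)`. -/
def Lm (W : Finset ι) (a : ι → Fin m → ℕ) (Z : ι → R) (σ : Finset (Fin m)) : R :=
  ∏ t ∈ W, Z t ^ (σ.sup (a t))

/-- The quotient of `Lm σ` by `Lm (σ.erase i)`. -/
def cm (W : Finset ι) (a : ι → Fin m → ℕ) (Z : ι → R) (σ : Finset (Fin m)) (i : Fin m) : R :=
  ∏ t ∈ W, Z t ^ (σ.sup (a t) - (σ.erase i).sup (a t))

lemma cm_mul_Lm (W : Finset ι) (a : ι → Fin m → ℕ) (Z : ι → R) (σ : Finset (Fin m)) (i : Fin m) :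
    cm W a Z σ i * Lm W a Z (σ.erase i) = Lm W a Z σ := by
  unfold cm Lm
  rw [← Finset.prod_mul_distrib]
  refine Finset.prod_congr rfl fun t _ => ?_
  rw [← pow_add, Nat.sub_add_cancel (Finset.sup_mono (Finset.erase_subset _ _))]

lemma cm_insert (W : Finset ι) (a : ι → Fin m → ℕ) (Z : ι → R) (τ : Finset (Fin m)) (i : Fin m)
    (hi : i ∉ τ) : cm W a Z (insert i τ) i =
      ∏ t ∈ W, Z t ^ ((insert i τ).sup (a t) - τ.sup (a t)) := by
  unfold cm
  rw [Finset.erase_insert hi]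

lemma cm_insert_mul_Lm (W : Finset ι) (a : ι → Fin m → ℕ) (Z : ι → R) (τ : Finset (Fin m))
    (i : Fin m) (hi : i ∉ τ) :
    cm W a Z (insert i τ) i * Lm W a Z τ = Lm W a Z (insert i τ) := by
  conv_rhs => rw [← cm_mul_Lm W a Z (insert i τ) i, Finset.erase_insert hi]

lemma cm_comm (W : Finset ι) (a : ι → Fin m → ℕ) (Z : ι → R) : Comm (cm W a Z) := by
  intro τ i j hi hj hij
  rw [cm_insert _ _ _ _ _ hi, cm_insert _ _ _ _ _ hj,
    cm_insert _ _ _ _ _ (by simp [hj, Ne.symm hij]), cm_insert _ _ _ _ _ (by simp [hi, hij]),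
    ← Finset.prod_mul_distrib, ← Finset.prod_mul_distrib]
  refine Finset.prod_congr rfl fun t _ => ?_
  rw [← pow_add, ← pow_add, Finset.insert_comm i j]
  congr 1
  have h1 : τ.sup (a t) ≤ (insert i τ).sup (a t) := Finset.sup_mono (Finset.subset_insert _ _)
  have h2 : τ.sup (a t) ≤ (insert j τ).sup (a t) := Finset.sup_mono (Finset.subset_insert _ _)
  have h3 : (insert i τ).sup (a t) ≤ (insert j (insert i τ)).sup (a t) :=
    Finset.sup_mono (Finset.subset_insert _ _)
  have h4 : (insert j τ).sup (a t) ≤ (insert j (insert i τ)).sup (a t) := by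
    rw [Finset.insert_comm]; exact Finset.sup_mono (Finset.subset_insert _ _)
  omega

lemma map_cm {R' : Type*} [CommRing R'] (φ : R →+* R') (W : Finset ι) (a : ι → Fin m → ℕ)
    (Z : ι → R) (σ : Finset (Fin m)) (i : Fin m) :
    φ (cm W a Z σ i) = cm W a (fun t => φ (Z t)) σ i := by
  simp [cm]

open MvPolynomial in
/-- Exactness of the Taylor complex of monomials. -/
theorem ex_mono {k : Type*} [Field k] {κ : Type*} (W : Finset ι) (a : ι → Fin m → ℕ)
    (e : ι → κ) (he : Set.InjOn e W) (p : ℕ) (hp : 1 ≤ p) :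
    Ex (cm W a (fun t => (X (e t) : MvPolynomial κ k))) (MvPolynomial κ k) p := by
  classical
  intro f hf hd
  set Z : ι → MvPolynomial κ k := fun t => X (e t) with hZ
  let lam : Finset (Fin m) → κ →₀ ℕ := fun σ => ∑ t ∈ W, Finsupp.single (e t) (σ.sup (a t))
  have hLm : ∀ σ, Lm W a Z σ = monomial (lam σ) 1 := by
    intro σ
    simp only [Lm, lam, hZ]
    rw [monomial_sum_one]
    exact Finset.prod_congr rfl fun t _ => X_pow_eq_monomial
  have hlam : ∀ σ β, lam σ ≤ β ↔ ∀ t ∈ W, ∀ j ∈ σ, a t j ≤ β (e t) := by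
    intro σ β
    have h1 : ∀ t ∈ W, lam σ (e t) = σ.sup (a t) := by
      intro t ht
      simp only [lam, Finsupp.finsetSum_apply]
      rw [Finset.sum_eq_single t]
      · simp
      · intro b hb hbt
        rw [Finsupp.single_apply, if_neg]
        intro h; exact hbt (he hb ht h)
      · intro h; exact absurd ht h
    constructor
    · intro h t ht j hj
      have := h (e t)
      rw [h1 t ht] at this
      exact (Finset.le_sup (f := a t) hj).trans this
    · intro h x
      by_cases hx : ∃ t ∈ W, e t = x
      · obtain ⟨t, ht, rfl⟩ := hx
        rw [h1 t ht]
        exact Finset.sup_le (h t ht)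
      · have : lam σ x = 0 := by
          simp only [lam, Finsupp.finsetSum_apply]
          refine Finset.sum_eq_zero fun t ht => ?_
          rw [Finsupp.single_apply, if_neg]
          intro h; exact hx ⟨t, ht, h⟩
        rw [this]; exact Nat.zero_le _
  let F : Finset (Fin m) → MvPolynomial κ k := fun σ => Lm W a Z σ • f σ
  have hresc : ∀ g : Finset (Fin m) → MvPolynomial κ k,
      dT (fun _ _ => (1 : MvPolynomial κ k)) (MvPolynomial κ k) (fun σ => Lm W a Z σ • g σ) =
        fun σ => Lm W a Z σ • dT (cm W a Z) _ g σ :=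
    fun g => dT_rescale (cm W a Z) _ (Lm W a Z)
      (fun τ i hi => by rw [one_mul, mul_comm, cm_insert_mul_Lm _ _ _ _ _ hi]) g
  have hF0 : dT (fun _ _ => (1 : MvPolynomial κ k)) (MvPolynomial κ k) F = 0 := by
    rw [hresc, hd]; ext1; simp
  have hFc : ∀ σ β, coeff β (F σ) ≠ 0 → lam σ ≤ β := by
    intro σ β h
    simp only [F, hLm, smul_eq_mul, coeff_monomial_mul'] at h
    by_contra hn
    exact h (if_neg hn)
  let B : Finset (κ →₀ ℕ) := Finset.univ.biUnion fun σ => (F σ).support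
  have hBF : ∀ σ β, β ∉ B → coeff β (F σ) = 0 := by
    intro σ β h
    by_contra hn
    exact h (Finset.mem_biUnion.2 ⟨σ, Finset.mem_univ _, mem_support_iff.2 hn⟩)
  have hB : ∀ β : B, ∃ j : Fin m, ∀ t ∈ W, a t j ≤ β.1 (e t) := by
    rintro ⟨β, hβ⟩
    obtain ⟨σ, -, hσ⟩ := Finset.mem_biUnion.1 hβ
    rw [mem_support_iff] at hσ
    have h1 := (hlam σ β).1 (hFc σ β hσ)
    have h2 : σ.card = p := by
      by_contra hn
      apply hσ
      simp [F, hf σ hn]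
    obtain ⟨j, hj⟩ := Finset.card_pos.1 (by omega : 0 < σ.card)
    exact ⟨j, fun t ht => h1 t ht j hj⟩
  choose j0 hj0 using hB
  let Gc : B → Finset (Fin m) → k := fun β σ => if j0 β ∈ σ then
    sg (σ.erase (j0 β)) (j0 β) • coeff β.1 (F (σ.erase (j0 β))) else 0
  let G : Finset (Fin m) → MvPolynomial κ k := fun σ => ∑ β : B, monomial β.1 (Gc β σ)
  have hG : dT (fun _ _ => (1 : MvPolynomial κ k)) (MvPolynomial κ k) G = F := by
    ext1 τ
    have h1 : ∀ β : B, ∑ i ∈ τᶜ, sg τ i • Gc β (insert i τ) = coeff β.1 (F τ) := by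
      intro β
      refine plain_exact (j0 β) (fun σ => coeff β.1 (F σ)) (fun τ => ?_) τ
      have := congrArg (coeffAddMonoidHom β.1) (congrFun hF0 τ)
      simp only [dT_apply, one_smul, map_sum, map_zsmul] at this
      exact this
    have h2 : F τ = ∑ β : B, monomial β.1 (coeff β.1 (F τ)) := by
      conv_lhs => rw [(F τ).as_sum]
      rw [Finset.sum_coe_sort B (fun β => monomial β (coeff β (F τ)))]
      refine Finset.sum_subset ?_ ?_
      · exact Finset.subset_biUnion_of_mem (fun σ => (F σ).support) (Finset.mem_univ τ)
      · intro β _ h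
        rw [notMem_support_iff.1 h, map_zero]
    rw [h2, dT_apply]
    simp only [one_smul, G, Finset.smul_sum]
    rw [Finset.sum_comm]
    refine Finset.sum_congr rfl fun β _ => ?_
    rw [← h1 β, map_sum]
    refine Finset.sum_congr rfl fun i _ => ?_
    rw [map_zsmul]
  have hdiv : ∀ σ, Lm W a Z σ ∣ G σ := by
    intro σ
    refine Finset.dvd_sum fun β _ => ?_
    by_cases h0 : Gc β σ = 0
    · rw [h0, map_zero]; exact dvd_zero _
    · have hj : j0 β ∈ σ := by
        by_contra hn; exact h0 (if_neg hn)
      have h1 : coeff β.1 (F (σ.erase (j0 β))) ≠ 0 := by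
        intro hz
        apply h0
        simp only [Gc]
        rw [if_pos hj, hz, smul_zero]
      have h2 := (hlam _ _).1 (hFc _ _ h1)
      have h3 : lam σ ≤ β.1 := by
        rw [hlam]
        intro t ht j hjσ
        by_cases hjj : j = j0 β
        · rw [hjj]; exact hj0 β t ht
        · exact h2 t ht j (Finset.mem_erase.2 ⟨hjj, hjσ⟩)
      rw [hLm]
      refine ⟨monomial (β.1 - lam σ) (Gc β σ), ?_⟩
      rw [monomial_mul, one_mul, add_tsub_cancel_of_le h3]
  choose g hg using hdiv
  refine ⟨g, ?_⟩
  have h5 := hresc g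
  have h6 : (fun σ => Lm W a Z σ • g σ) = G := by
    ext1 σ; rw [hg σ, smul_eq_mul]
  rw [h6, hG] at h5
  ext1 τ
  have h7 := congrFun h5 τ
  simp only [F, smul_eq_mul] at h7
  refine (mul_left_cancel₀ ?_ h7).symm
  rw [hLm]
  simp

end mono

section forms

open MvPolynomial

variable {k : Type} [Field k] {n m r : ℕ}

/-- Linear forms from coefficient vectors. -/
noncomputable def lf (k : Type) [Field k] (n : ℕ) : (Fin n → k) →ₗ[k] MvPolynomial (Fin n) k :=
  (SymmetricAlgebra.equivMvPolynomial (Pi.basisFun k (Fin n))).toLinearMap ∘ₗ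
    SymmetricAlgebra.ι k (Fin n → k)

lemma lf_single (l : Fin n) : lf k n (Pi.single l 1) = X l := by
  have := SymmetricAlgebra.equivMvPolynomial_ι_apply (Pi.basisFun k (Fin n)) l
  simpa [lf] using this

lemma exists_lf (z : MvPolynomial (Fin n) k) (hz : z.IsHomogeneous 1) : ∃ v, lf k n v = z := by
  have h : z ∈ homogeneousSubmodule (Fin n) k 1 := hz
  rw [homogeneousSubmodule_one_eq_span_X] at h
  have h2 : Submodule.span k (Set.range (X : Fin n → MvPolynomial (Fin n) k)) ≤
      LinearMap.range (lf k n) := by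
    rw [Submodule.span_le]
    rintro _ ⟨l, rfl⟩
    exact ⟨_, lf_single l⟩
  exact h2 h

lemma cm_coe {R : Type*} [CommRing R] {ι : Type*} (s : Finset ι) (a : ι → Fin m → ℕ) (Z : ι → R) :
    cm (Finset.univ : Finset s) (fun t => a t.1) (fun t => Z t.1) = cm s a Z := by
  ext σ i
  unfold cm
  exact Finset.prod_coe_sort s (fun t => Z t ^ (σ.sup (a t) - (σ.erase i).sup (a t)))

lemma ex_forms (a : Fin r → Fin m → ℕ) (Z : Fin r → MvPolynomial (Fin n) k)
    (hZlin : ∀ i, (Z i).IsHomogeneous 1) (s : Finset (Fin r))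
    (hs : LinearIndependent k (fun i : s => Z i.1)) (p : ℕ) (hp : 1 ≤ p) :
    Ex (cm s a Z) (MvPolynomial (Fin n) k) p := by
  choose v hv using fun i => exists_lf (Z i) (hZlin i)
  have hv' : LinearIndependent k (fun i : s => v i.1) := by
    apply LinearIndependent.of_comp (lf k n)
    convert hs using 2 with i
    exact hv _
  let B := Module.Basis.extend hv'.linearIndepOn_id
  have hmem : ∀ t : s, v t.1 ∈ hv'.linearIndepOn_id.extend (Set.subset_univ _) := fun t =>
    Module.Basis.subset_extend hv'.linearIndepOn_id ⟨t, rfl⟩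
  let e : s → hv'.linearIndepOn_id.extend (Set.subset_univ _) := fun t => ⟨v t.1, hmem t⟩
  have he : Function.Injective e := by
    intro t t' h
    exact hv'.injective (congrArg Subtype.val h)
  let ψ := (SymmetricAlgebra.equivMvPolynomial B).symm.trans
    (SymmetricAlgebra.equivMvPolynomial (Pi.basisFun k (Fin n)))
  have hψ : ∀ t, ψ (X (e t)) = Z t.1 := by
    intro t
    rw [← hv t.1]
    simp only [ψ, AlgEquiv.trans_apply, SymmetricAlgebra.equivMvPolynomial_symm_X, lf]
    simp [B, e]
  have h1 := ex_mono (k := k) (Finset.univ : Finset s) (fun t => a t.1) e he.injOn p hp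
  rw [← cm_coe]
  refine Ex.of_equiv _ _ ψ.toRingEquiv.toAddEquiv ?_ h1
  intro σ i x
  change ψ (cm _ _ _ σ i * x) = _ * ψ x
  rw [map_mul]
  congr 1
  have hZ : (fun t : s => Z t.1) = fun t => ψ (X (e t)) := funext fun t => (hψ t).symm
  rw [hZ]
  exact map_cm ψ.toRingEquiv.toRingHom (Finset.univ : Finset s) (fun t => a t.1)
    (fun t => X (e t)) σ i

lemma ex_torsion {R : Type*} [CommRing R] (a : Fin r → Fin m → ℕ) (Z : Fin r → R)
    (s : Finset (Fin r)) (p : ℕ) (hs : Ex (cm s a Z) R p)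
    (f : Finset (Fin m) → R) (hf : Supp p f) (hd : dT (cm Finset.univ a Z) R f = 0) :
    ∃ g, dT (cm Finset.univ a Z) R g = Lm sᶜ a Z Finset.univ • f := by
  have hsplit : ∀ σ i, cm Finset.univ a Z σ i = cm s a Z σ i * cm sᶜ a Z σ i := by
    intro σ i
    exact (Finset.prod_mul_prod_compl s _).symm
  obtain ⟨g', hg'⟩ := hs (fun σ => Lm sᶜ a Z σ • f σ) (fun σ hσ => by simp [hf σ hσ])
    (by
      rw [dT_rescale (cm Finset.univ a Z) (cm s a Z), hd]
      · ext; simp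
      · intro τ i hi
        rw [hsplit, ← cm_insert_mul_Lm sᶜ a Z τ i hi]; ring)
  let μ : Finset (Fin m) → R := fun σ =>
    ∏ t ∈ sᶜ, Z t ^ ((Finset.univ : Finset (Fin m)).sup (a t) - σ.sup (a t))
  have hμ : ∀ σ, μ σ * Lm sᶜ a Z σ = Lm sᶜ a Z Finset.univ := by
    intro σ
    simp only [μ, Lm]
    rw [← Finset.prod_mul_distrib]
    refine Finset.prod_congr rfl fun t _ => ?_
    rw [← pow_add, Nat.sub_add_cancel (Finset.sup_mono (Finset.subset_univ _))]
  refine ⟨fun σ => μ σ • g' σ, ?_⟩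
  rw [dT_rescale (cm s a Z) (cm Finset.univ a Z), hg']
  · ext σ
    simp only [Pi.smul_apply, smul_smul, hμ]
  · intro τ i hi
    have : cm sᶜ a Z (insert i τ) i * μ (insert i τ) = μ τ := by
      rw [cm_insert _ _ _ _ _ hi]
      simp only [μ]
      rw [← Finset.prod_mul_distrib]
      refine Finset.prod_congr rfl fun t _ => ?_
      rw [← pow_add]
      congr 1
      have h1 : τ.sup (a t) ≤ (insert i τ).sup (a t) := Finset.sup_mono (Finset.subset_insert _ _)
      have h2 : (insert i τ).sup (a t) ≤ (Finset.univ : Finset (Fin m)).sup (a t) :=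
        Finset.sup_mono (Finset.subset_univ _)
      omega
    rw [hsplit, ← this]; ring

theorem ex_of_soc (a : Fin r → Fin m → ℕ) (Z : Fin r → MvPolynomial (Fin n) k)
    (hZlin : ∀ i, (Z i).IsHomogeneous 1)
    (hZgen : ∀ s : Finset (Fin r), s.card ≤ n → LinearIndependent k (fun i : s => Z i.1))
    (p : ℕ) (hp : 1 ≤ p)
    (hsoc : Soc (cm Finset.univ a Z) (X : Fin n → MvPolynomial (Fin n) k)
      (MvPolynomial (Fin n) k) p) :
    Ex (cm Finset.univ a Z) (MvPolynomial (Fin n) k) p := by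
  classical
  intro f hf hd
  let J : Ideal (MvPolynomial (Fin n) k) :=
    { carrier := {x | ∃ g, dT (cm Finset.univ a Z) (MvPolynomial (Fin n) k) g = x • f}
      zero_mem' := ⟨0, by simp⟩
      add_mem' := by
        rintro x y ⟨g, hg⟩ ⟨h, hh⟩
        exact ⟨g + h, by rw [map_add, hg, hh, add_smul]⟩
      smul_mem' := by
        rintro x y ⟨g, hg⟩
        exact ⟨x • g, by rw [dT_smul, hg, smul_eq_mul, mul_smul]⟩ }
  have hJ : ∀ x, x ∈ J ↔ ∃ g, dT (cm Finset.univ a Z) (MvPolynomial (Fin n) k) g = x • f :=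
    fun x => Iff.rfl
  let M : Ideal (MvPolynomial (Fin n) k) := Ideal.span (Set.range X)
  have hrad : M ≤ J.radical := by
    rw [Ideal.radical_eq_sInf]
    refine le_sInf ?_
    rintro P ⟨hJP, hP⟩
    let W : Finset (Fin r) := Finset.univ.filter fun i => Z i ∈ P
    rcases le_or_gt n W.card with hW | hW
    · obtain ⟨s, hsW, hs⟩ := Finset.exists_subset_card_eq hW
      choose v hv using fun i => exists_lf (Z i) (hZlin i)
      have hv' : LinearIndependent k (fun i : s => v i.1) := by
        apply LinearIndependent.of_comp (lf k n)
        convert hZgen s hs.le using 2 with i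
        exact hv _
      have hspan := hv'.span_eq_top_of_card_eq_finrank' (by simp [hs])
      have hall : ∀ w, lf k n w ∈ P := by
        intro w
        have hw : w ∈ Submodule.span k (Set.range fun i : s => v i.1) := by
          rw [hspan]; trivial
        induction hw using Submodule.span_induction with
        | mem x hx =>
          obtain ⟨i, rfl⟩ := hx
          simp only [hv]
          exact (Finset.mem_filter.1 (hsW i.2)).2
        | zero => simp
        | add x y _ _ hx hy => rw [map_add]; exact P.add_mem hx hy
        | smul t x _ hx =>
          rw [map_smul, MvPolynomial.smul_eq_C_mul]; exact P.mul_mem_left _ hx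
      rw [Ideal.span_le]
      rintro _ ⟨l, rfl⟩
      rw [← lf_single]; exact hall _
    · exfalso
      have h1 := ex_torsion a Z W p (ex_forms a Z hZlin W (hZgen W hW.le) p hp) f hf hd
      have h2 : Lm Wᶜ a Z Finset.univ ∈ P := hJP h1
      unfold Lm at h2
      obtain ⟨t, ht, h3⟩ := (hP.prod_mem_iff).1 h2
      have h4 := hP.mem_of_pow_mem _ h3
      simp [W] at ht
      exact ht h4
  obtain ⟨N, hN⟩ := Ideal.exists_pow_le_of_le_radical_of_fg hrad
    (IsNoetherian.noetherian M)
  have hdesc : ∀ N : ℕ, M ^ N ≤ J → (1 : MvPolynomial (Fin n) k) ∈ J := by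
    intro N
    induction N with
    | zero => intro h; rw [pow_zero, Ideal.one_eq_top] at h; exact h trivial
    | succ N ih =>
      intro h
      apply ih
      intro x hx
      refine hsoc (x • f) (fun σ hσ => by simp [hf σ hσ]) (by rw [dT_smul, hd, smul_zero]) ?_
      intro l
      rw [smul_smul]
      refine h ?_
      rw [pow_succ']
      exact Ideal.mul_mem_mul (Ideal.subset_span ⟨l, rfl⟩) hx
  obtain ⟨g, hg⟩ := hdesc N hN
  exact ⟨g, by rw [hg, one_smul]⟩

end forms

section reg

open MvPolynomial

variable {k : Type} [Field k] {n m : ℕ}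

/-- The ideal generated by the first `j` variables. -/
noncomputable def JJ (k : Type) [Field k] (n j : ℕ) : Ideal (MvPolynomial (Fin n) k) :=
  Ideal.span (X '' {l : Fin n | l.1 < j})

lemma JJ_zero : JJ k n 0 = ⊥ := by
  unfold JJ; simp

lemma JJ_top : JJ k n n = Ideal.span (Set.range X) := by
  unfold JJ
  congr 1
  rw [← Set.image_univ]
  congr 1
  ext l; simp

lemma JJ_succ (j : Fin n) : JJ k n (j.1 + 1) = JJ k n j.1 ⊔ Ideal.span {X j} := by
  unfold JJ
  rw [← Ideal.span_union]
  congr 1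
  rw [← Set.image_singleton, ← Set.image_union]
  congr 1
  ext l
  simp only [Set.mem_ofPred_eq, Set.mem_union, Set.mem_singleton_iff, Fin.ext_iff]
  omega

lemma JJ_reg (j : Fin n) (y : MvPolynomial (Fin n) k) (h : X j * y ∈ JJ k n j.1) :
    y ∈ JJ k n j.1 := by
  classical
  unfold JJ at *
  rw [mem_ideal_span_X_image] at h ⊢
  intro μ hμ
  have h1 : Finsupp.single j 1 + μ ∈ (X j * y).support := by
    rw [mem_support_iff, coeff_X_mul]
    exact mem_support_iff.1 hμ
  obtain ⟨i, hi, h2⟩ := h _ h1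
  refine ⟨i, hi, ?_⟩
  have hij : j ≠ i := by
    rintro rfl
    simp at hi
  rw [Finsupp.add_apply, Finsupp.single_apply, if_neg hij, zero_add] at h2
  exact h2

lemma qstep (j : Fin n) :
    ∃ β : (MvPolynomial (Fin n) k ⧸ JJ k n j.1) →ₗ[MvPolynomial (Fin n) k]
        (MvPolynomial (Fin n) k ⧸ JJ k n (j.1 + 1)),
      Function.Surjective β ∧
      (∀ y, β y = 0 ↔ ∃ z, (X j : MvPolynomial (Fin n) k) • z = y) ∧
      Function.Injective (fun y : MvPolynomial (Fin n) k ⧸ JJ k n j.1 =>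
        (X j : MvPolynomial (Fin n) k) • y) := by
  have hle : JJ k n j.1 ≤ JJ k n (j.1 + 1) := by rw [JJ_succ]; exact le_sup_left
  refine ⟨Submodule.factor hle, Submodule.factor_surjective hle, ?_, ?_⟩
  · intro y
    obtain ⟨y, rfl⟩ := Submodule.Quotient.mk_surjective _ y
    have h0 : Submodule.factor hle (Submodule.Quotient.mk y) = Submodule.Quotient.mk y := rfl
    rw [h0, Submodule.Quotient.mk_eq_zero, JJ_succ]
    constructor
    · intro h
      obtain ⟨u, hu, w, hw, rfl⟩ := Submodule.mem_sup.1 h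
      obtain ⟨z, rfl⟩ := Ideal.mem_span_singleton.1 hw
      refine ⟨Submodule.Quotient.mk z, ?_⟩
      rw [← Submodule.Quotient.mk_smul, Submodule.Quotient.eq, smul_eq_mul]
      have : X j * z - (u + X j * z) = - u := by ring
      rw [this]
      exact (JJ k n j.1).neg_mem hu
    · rintro ⟨z, hz⟩
      obtain ⟨z, rfl⟩ := Submodule.Quotient.mk_surjective _ z
      rw [← Submodule.Quotient.mk_smul, Submodule.Quotient.eq, smul_eq_mul] at hz
      have : y = -(X j * z - y) + X j * z := by ring
      rw [this]
      exact Submodule.add_mem_sup ((JJ k n j.1).neg_mem hz)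
        (Ideal.mem_span_singleton.2 (dvd_mul_right _ _))
  · intro y y' h
    obtain ⟨y, rfl⟩ := Submodule.Quotient.mk_surjective _ y
    obtain ⟨y', rfl⟩ := Submodule.Quotient.mk_surjective _ y'
    simp only [← Submodule.Quotient.mk_smul, Submodule.Quotient.eq, smul_eq_mul, ← mul_sub] at h
    rw [Submodule.Quotient.eq]
    exact JJ_reg j _ h

lemma ex_quot (c : Finset (Fin m) → Fin m → MvPolynomial (Fin n) k) (hc : Comm c) (q : ℕ)
    (h : ∀ i, q < i → Ex c (MvPolynomial (Fin n) k) i) (j : ℕ) (hj : j ≤ n) :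
    ∀ i, q + j < i → Ex c (MvPolynomial (Fin n) k ⧸ JJ k n j) i := by
  induction j with
  | zero =>
    intro i hi
    refine Ex.of_equiv c c (Submodule.quotEquivOfEqBot _ JJ_zero).symm.toAddEquiv ?_ (h i hi)
    intro σ i x
    exact map_smul (Submodule.quotEquivOfEqBot _ JJ_zero).symm _ _
  | succ j ih =>
    intro i hi
    obtain ⟨i, rfl⟩ : ∃ i', i = i' + 1 := ⟨i - 1, by omega⟩
    obtain ⟨β, h1, h2, h3⟩ := qstep (k := k) (⟨j, by omega⟩ : Fin n)
    refine ses_a c (LinearMap.lsmul (MvPolynomial (Fin n) k) _ (X ⟨j, by omega⟩)) β hc h3 h1 ?_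
      (ih (by omega) (i + 1) (by omega)) (ih (by omega) i (by omega))
    intro y
    rw [h2 y]
    rfl

lemma soc_quot (c : Finset (Fin m) → Fin m → MvPolynomial (Fin n) k) (hc : Comm c) (q : ℕ)
    (h : ∀ i, q < i → Ex c (MvPolynomial (Fin n) k) i)
    (hn : Ex c (MvPolynomial (Fin n) k ⧸ JJ k n n) (q + n)) (d : ℕ) :
    ∀ j, j + d = n → Soc c (X : Fin n → MvPolynomial (Fin n) k)
      (MvPolynomial (Fin n) k ⧸ JJ k n j) (q + j) := by
  induction d with
  | zero =>
    intro j hj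
    obtain rfl : j = n := by omega
    intro f hf hd _
    exact hn f hf hd
  | succ d ih =>
    intro j hj
    obtain ⟨β, h1, h2, h3⟩ := qstep (k := k) (⟨j, by omega⟩ : Fin n)
    exact soc_step c X ⟨j, by omega⟩ hc β h3 h1 h2 (ex_quot c hc q h j (by omega) _ (by omega))
      (ih (j + 1) (by omega))

lemma soc_S (c : Finset (Fin m) → Fin m → MvPolynomial (Fin n) k) (hc : Comm c) (q : ℕ)
    (h : ∀ i, q < i → Ex c (MvPolynomial (Fin n) k) i)
    (hn : Ex c (MvPolynomial (Fin n) k ⧸ JJ k n n) (q + n)) :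
    Soc c (X : Fin n → MvPolynomial (Fin n) k) (MvPolynomial (Fin n) k) q := by
  have h0 := soc_quot c hc q h hn n 0 (by omega)
  let e := (Submodule.quotEquivOfEqBot _ (JJ_zero (k := k) (n := n))).symm
  intro f hf hd hx
  obtain ⟨g, hg⟩ := h0 (fun σ => e (f σ)) (fun σ hσ => by simp [hf σ hσ])
    (by
      have := dT_lin c e.toLinearMap f
      simp only [LinearEquiv.coe_coe] at this
      rw [this, hd]; ext1; simp)
    (by
      intro l
      obtain ⟨g, hg⟩ := hx l
      refine ⟨fun σ => e (g σ), ?_⟩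
      have := dT_lin c e.toLinearMap g
      simp only [LinearEquiv.coe_coe] at this
      rw [this, hg]; ext1 σ; exact map_smul e _ _)
  refine ⟨fun σ => e.symm (g σ), ?_⟩
  have := dT_lin c e.symm.toLinearMap g
  simp only [LinearEquiv.coe_coe] at this
  rw [this, hg]; ext1; simp

theorem main_iff {r : ℕ} (a : Fin r → Fin m → ℕ) (Z : Fin r → MvPolynomial (Fin n) k)
    (hZlin : ∀ i, (Z i).IsHomogeneous 1)
    (hZgen : ∀ s : Finset (Fin r), s.card ≤ n → LinearIndependent k (fun i : s => Z i.1)) :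
    (∀ p, 1 ≤ p → Ex (cm Finset.univ a Z) (MvPolynomial (Fin n) k) p) ↔
      ∀ p, n + 1 ≤ p → Ex (cm Finset.univ a Z)
        (MvPolynomial (Fin n) k ⧸ Ideal.span (Set.range (X : Fin n → MvPolynomial (Fin n) k))) p := by
  have hc := cm_comm Finset.univ a Z
  rw [← JJ_top]
  constructor
  · intro h p hp
    exact ex_quot _ hc 0 (fun i hi => h i hi) n le_rfl p (by omega)
  · intro h
    have key : ∀ d p, 1 ≤ p → m + 1 ≤ p + d →
        Ex (cm Finset.univ a Z) (MvPolynomial (Fin n) k) p := by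
      intro d
      induction d with
      | zero => intro p _ hm; exact ex_of_gt _ p (by omega)
      | succ d ih =>
        intro p hp hm
        exact ex_of_soc a Z hZlin hZgen p hp
          (soc_S _ hc p (fun i hi => ih i (by omega) (by omega)) (h _ (by omega)))
    intro p hp
    exact key (m + 1) p hp (by omega)

/-- Comparison of the residue field complexes. -/
theorem residue_iff {r : ℕ} (a : Fin r → Fin m → ℕ) (Z : Fin r → MvPolynomial (Fin n) k)
    (hZlin : ∀ i, (Z i).IsHomogeneous 1) (p : ℕ) :
    Ex (cm Finset.univ a Z)
        (MvPolynomial (Fin n) k ⧸ Ideal.span (Set.range (X : Fin n → MvPolynomial (Fin n) k))) p ↔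
    Ex (cm Finset.univ a (X : Fin r → MvPolynomial (Fin r) k))
        (MvPolynomial (Fin r) k ⧸ Ideal.span (Set.range (X : Fin r → MvPolynomial (Fin r) k))) p := by
  have key : ∀ (n : ℕ) (Z : Fin r → MvPolynomial (Fin n) k) (hZlin : ∀ i, (Z i).IsHomogeneous 1),
      Ex (cm Finset.univ a Z)
        (MvPolynomial (Fin n) k ⧸ Ideal.span (Set.range (X : Fin n → MvPolynomial (Fin n) k))) p ↔
      Ex (cm Finset.univ a (fun _ : Fin r => (0 : k))) k p := by
    intro n Z hZ
    have hker : Ideal.span (Set.range (X : Fin n → MvPolynomial (Fin n) k)) =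
        RingHom.ker (constantCoeff : MvPolynomial (Fin n) k →+* k) := by
      rw [← Set.image_univ]
      ext y
      rw [mem_ideal_span_X_image, RingHom.mem_ker]
      constructor
      · intro h
        by_contra hn
        obtain ⟨i, -, hi⟩ := h 0 (mem_support_iff.2 hn)
        exact hi rfl
      · intro h μ hμ
        by_contra! hn
        have : μ = 0 := by ext i; exact hn i trivial
        rw [this, mem_support_iff] at hμ
        exact hμ h
    have hsurj : Function.Surjective (constantCoeff : MvPolynomial (Fin n) k →+* k) :=
      fun x => ⟨C x, by simp⟩
    let e := (Ideal.quotEquivOfEq hker).trans (RingHom.quotientKerEquivOfSurjective hsurj)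
    refine ex_equiv_iff _ _ e.toAddEquiv ?_
    intro σ i x
    obtain ⟨x, rfl⟩ := Ideal.Quotient.mk_surjective x
    have h1 : ∀ y, e (Ideal.Quotient.mk _ y) = constantCoeff y := fun y => rfl
    have h2 : cm Finset.univ a Z σ i • (Ideal.Quotient.mk (Ideal.span (Set.range X)) x) =
      Ideal.Quotient.mk _ (cm Finset.univ a Z σ i * x) := rfl
    change e _ = _ • e _
    rw [h2, h1, h1, map_mul, map_cm]
    have h3 : ∀ t, constantCoeff (Z t) = 0 := by
      intro t
      by_contra hn
      have := hZ t hn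
      simp at this
    simp only [h3, smul_eq_mul]
  rw [key n Z hZlin, key r X (fun i => isHomogeneous_X k i)]

end reg

section balance

variable {m : ℕ} {R : Type} [CommRing R] (c : Finset (Fin m) → Fin m → R)

lemma sg_empty (i : Fin m) : sg (∅ : Finset (Fin m)) i = 1 := by simp [sg]

lemma dT_empty {N : Type*} [AddCommGroup N] [Module R N] (f : Finset (Fin m) → N) :
    dT c N f ∅ = ∑ i, c {i} i • f {i} := by
  rw [dT_apply]
  simp [sg_empty]

lemma dT_eq_zero_of_supp_one {N : Type*} [AddCommGroup N] [Module R N] {f : Finset (Fin m) → N}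
    (hf : Supp 1 f) (h : dT c N f ∅ = 0) : dT c N f = 0 := by
  ext τ
  by_cases hτ : τ = ∅
  · rw [hτ, h]; rfl
  · exact supp_dT (p := 0) c hf τ (by simpa using hτ)

lemma mem_smul_top_iff {N : Type*} [AddCommGroup N] [Module R N] (x : N) :
    x ∈ (Ideal.span (Set.range fun i => c {i} i) • (⊤ : Submodule R N)) ↔
      ∃ g : Finset (Fin m) → N, Supp 1 g ∧ dT c N g ∅ = x := by
  constructor
  · intro h
    refine Submodule.smul_induction_on h ?_ ?_
    · intro s hs y _
      refine Submodule.span_induction (p := fun s _ => ∃ g : Finset (Fin m) → N,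
        Supp 1 g ∧ dT c N g ∅ = s • y) ?_ ?_ ?_ ?_ hs
      · intro s hs
        obtain ⟨i, rfl⟩ := hs
        refine ⟨fun σ => if σ = {i} then y else 0, ?_, ?_⟩
        · intro σ hσ
          refine if_neg ?_
          rintro rfl
          simp at hσ
        · rw [dT_empty, Finset.sum_eq_single i]
          · simp
          · intro b _ hb
            simp [hb]
          · simp
      · exact ⟨0, fun _ _ => rfl, by simp⟩
      · intro s t _ _ hs ht
        obtain ⟨g, h1, h2⟩ := hs
        obtain ⟨g', h1', h2'⟩ := ht
        exact ⟨g + g', fun σ hσ => by simp [h1 σ hσ, h1' σ hσ], by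
          rw [map_add, Pi.add_apply, h2, h2', add_smul]⟩
      · intro s t _ ht
        obtain ⟨g, h1, h2⟩ := ht
        exact ⟨s • g, fun σ hσ => by simp [h1 σ hσ], by
          rw [dT_smul, Pi.smul_apply, h2, smul_smul, smul_eq_mul]⟩
    · intro x y hx hy
      obtain ⟨g, h1, h2⟩ := hx
      obtain ⟨g', h1', h2'⟩ := hy
      exact ⟨g + g', fun σ hσ => by simp [h1 σ hσ, h1' σ hσ], by
          rw [map_add, Pi.add_apply, h2, h2']⟩
  · rintro ⟨g, -, rfl⟩
    rw [dT_empty]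
    refine Submodule.sum_mem _ fun i _ => ?_
    exact Submodule.smul_mem_smul (Ideal.subset_span ⟨i, rfl⟩) trivial

lemma ex_projective {p : ℕ} (h : Ex c R p) (P : Type) [AddCommGroup P] [Module R P]
    [Module.Projective R P] : Ex c P p := by
  classical
  have hfree : Ex c (P →₀ R) p := by
    intro f hf hd
    have h1 : ∀ b : P, ∃ g : Finset (Fin m) → R, dT c R g = fun σ => f σ b := by
      intro b
      refine h (fun σ => f σ b) (fun σ hσ => by simp [hf σ hσ]) ?_
      have := dT_lin c (Finsupp.lapply b : (P →₀ R) →ₗ[R] R) f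
      rw [hd] at this
      refine this.trans ?_
      ext1
      simp
    choose g hg using h1
    let B : Finset P := Finset.univ.biUnion fun σ => (f σ).support
    refine ⟨fun σ => ∑ b ∈ B, Finsupp.single b (g b σ), ?_⟩
    have h2 : (fun σ => ∑ b ∈ B, Finsupp.single b (g b σ)) =
        ∑ b ∈ B, fun σ => (Finsupp.lsingle b : R →ₗ[R] (P →₀ R)) (g b σ) := by
      ext σ; simp
    rw [h2, map_sum]
    simp only [dT_lin, hg]
    ext1 σ
    rw [Finset.sum_apply]
    simp only [Finsupp.lsingle_apply]
    conv_rhs => rw [← Finsupp.sum_single (f σ), Finsupp.sum]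
    symm
    refine Finset.sum_subset
      (Finset.subset_biUnion_of_mem (fun σ => (f σ).support) (Finset.mem_univ σ)) ?_
    intro b _ hb
    rw [Finsupp.notMem_support_iff.1 hb, Finsupp.single_zero]
  obtain ⟨s, hs⟩ := (Module.projective_def' (R := R) (P := P)).1 inferInstance
  intro f hf hd
  obtain ⟨g, hg⟩ := hfree (fun σ => s (f σ)) (fun σ hσ => by simp [hf σ hσ])
    (by rw [dT_lin, hd]; ext1; simp)
  refine ⟨fun σ => Finsupp.linearCombination R id (g σ), ?_⟩
  rw [dT_lin, hg]
  ext1 σ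
  exact congrArg (fun φ => φ (f σ)) hs

lemma balance_zero (hc : Comm c) (N P₀ P₁ P₂ : Type)
    [AddCommGroup N] [Module R N] [AddCommGroup P₀] [Module R P₀] [AddCommGroup P₁] [Module R P₁]
    [AddCommGroup P₂] [Module R P₂] (π : P₀ →ₗ[R] N) (δ₀ : P₁ →ₗ[R] P₀) (δ₁ : P₂ →ₗ[R] P₁)
    (hπ : Function.Surjective π) (h0 : Function.Exact δ₀ π) (h1 : Function.Exact δ₁ δ₀)
    (hP : Ex c P₀ 1) :
    Ex c N 1 ↔ ∀ y : P₁, δ₀ y ∈ (Ideal.span (Set.range fun i => c {i} i) • (⊤ : Submodule R P₀)) →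
      ∃ z, y - δ₁ z ∈ (Ideal.span (Set.range fun i => c {i} i) • (⊤ : Submodule R P₁)) := by
  constructor
  · intro h y hy
    obtain ⟨g, hgs, hg⟩ := (mem_smul_top_iff c _).1 hy
    obtain ⟨u, hus, hu⟩ := h.exists_supp c (f := fun σ => π (g σ))
      (fun σ hσ => by simp [hgs σ hσ])
      (dT_eq_zero_of_supp_one c (fun σ hσ => by simp [hgs σ hσ])
        (by
          rw [dT_lin]
          show π (dT c P₀ g ∅) = 0
          rw [hg]
          exact h0.apply_apply_eq_zero y))
    obtain ⟨H, hHs, hH⟩ := lift_fun π hπ hus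
    have e1 : ∀ σ, π ((g - dT c P₀ H) σ) = 0 := by
      intro σ
      have := congrFun (dT_lin c π H) σ
      rw [hH, hu] at this
      simp [← this]
    choose w' hw' using fun σ => (h0 _).1 (e1 σ)
    have e2 : dT c P₀ (fun σ => δ₀ (w' σ)) = dT c P₀ g := by
      rw [funext hw', map_sub, dT_dT c hc, sub_zero]
    have e3 : δ₀ (dT c P₁ w' ∅) = δ₀ y := by
      rw [← hg, ← e2, dT_lin]
    obtain ⟨z, hz⟩ := (h1 (y - dT c P₁ w' ∅)).1 (by rw [map_sub, e3, sub_self])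
    refine ⟨z, (mem_smul_top_iff c _).2 ⟨tr 1 w', supp_tr _ _, ?_⟩⟩
    rw [hz, dT_tr (p := 0)]
    simp [tr]
  · intro h f hf hd
    obtain ⟨F, hFs, hF⟩ := lift_fun π hπ hf
    obtain ⟨y, hy⟩ := (h0 (dT c P₀ F ∅)).1 (by
      have := congrFun (dT_lin c π F) ∅
      rw [hF, hd] at this
      exact this.symm)
    obtain ⟨z, hz⟩ := h y (by rw [hy]; exact (mem_smul_top_iff c _).2 ⟨F, hFs, rfl⟩)
    obtain ⟨w, hws, hw⟩ := (mem_smul_top_iff c _).1 hz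
    obtain ⟨G, hG⟩ := hP (F - fun σ => δ₀ (w σ)) (fun σ hσ => by simp [hFs σ hσ, hws σ hσ])
      (dT_eq_zero_of_supp_one c (fun σ hσ => by simp [hFs σ hσ, hws σ hσ])
        (by
          rw [map_sub, Pi.sub_apply, dT_lin]
          show dT c P₀ F ∅ - δ₀ (dT c P₁ w ∅) = 0
          rw [hw, map_sub, h1.apply_apply_eq_zero, hy]
          simp))
    refine ⟨fun σ => π (G σ), ?_⟩
    rw [dT_lin, hG, ← hF]
    ext σ
    simp [h0.apply_apply_eq_zero]

lemma balance (hc : Comm c) (p : ℕ) : ∀ (N : Type) [AddCommGroup N] [Module R N] (P : ℕ → Type)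
    [∀ j, AddCommGroup (P j)] [∀ j, Module R (P j)] (π : P 0 →ₗ[R] N)
    (δ : ∀ j, P (j + 1) →ₗ[R] P j)
    (_ : Function.Surjective π) (_ : Function.Exact (δ 0) π)
    (_ : ∀ j, Function.Exact (δ (j + 1)) (δ j))
    (_ : ∀ j i, 1 ≤ i → Ex c (P j) i),
    Ex c N (p + 1) ↔ ∀ y : P (p + 1),
      δ p y ∈ (Ideal.span (Set.range fun i => c {i} i) • (⊤ : Submodule R (P p))) →
      ∃ z, y - δ (p + 1) z ∈
        (Ideal.span (Set.range fun i => c {i} i) • (⊤ : Submodule R (P (p + 1)))) := by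
  induction p with
  | zero =>
    intro N _ _ P _ _ π δ hπ h0 h1 hP
    exact balance_zero c hc N (P 0) (P 1) (P 2) π (δ 0) (δ 1) hπ h0 (h1 0) (hP 0 1 le_rfl)
  | succ p ih =>
    intro N _ _ P _ _ π δ hπ h0 h1 hP
    have hsub : Function.Exact (LinearMap.ker π).subtype π := by
      intro y
      simp
    have hsi := (LinearMap.ker π).injective_subtype
    have e1 : Ex c N (p + 1 + 1) ↔ Ex c (LinearMap.ker π) (p + 1) :=
      ⟨fun h => ses_b c _ π hc hsi hπ hsub (hP 0 _ (by omega)) h,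
        fun h => ses_a c _ π hc hsi hπ hsub (hP 0 _ (by omega)) h⟩
    rw [e1]
    refine ih (LinearMap.ker π) (fun j => P (j + 1))
      ((δ 0).codRestrict _ (fun y => h0.apply_apply_eq_zero y)) (fun j => δ (j + 1)) ?_ ?_
      (fun j => h1 (j + 1)) (fun j => hP (j + 1))
    · rintro ⟨y, hy⟩
      obtain ⟨z, hz⟩ := (h0 y).1 hy
      exact ⟨z, Subtype.ext hz⟩
    · intro y
      rw [← h1 0 y]
      exact ⟨fun h => congrArg Subtype.val h, fun h => Subtype.ext h⟩

end balance

section tor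

open CategoryTheory TensorProduct

variable {R : Type} [CommRing R]

lemma one_tmul_eq_zero (I : Ideal R) {M : Type} [AddCommGroup M] [Module R M] (x : M) :
    ((1 : R ⧸ I) ⊗ₜ[R] x = 0) ↔ x ∈ (I • (⊤ : Submodule R M)) := by
  rw [← (TensorProduct.quotTensorEquivQuotSMul M I).map_eq_zero_iff]
  have := TensorProduct.quotTensorEquivQuotSMul_mk_tmul (M := M) I 1 x
  rw [map_one] at this
  rw [this, one_smul, Submodule.Quotient.mk_eq_zero]

lemma exists_one_tmul (I : Ideal R) {M : Type} [AddCommGroup M] [Module R M]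
    (t : (R ⧸ I) ⊗[R] M) : ∃ x : M, (1 : R ⧸ I) ⊗ₜ[R] x = t := by
  induction t with
  | zero => exact ⟨0, by simp⟩
  | add s t hs ht =>
    obtain ⟨x, rfl⟩ := hs
    obtain ⟨y, rfl⟩ := ht
    exact ⟨x + y, TensorProduct.tmul_add _ _ _⟩
  | tmul s y =>
    obtain ⟨s, rfl⟩ := Ideal.Quotient.mk_surjective s
    refine ⟨s • y, ?_⟩
    rw [TensorProduct.tmul_smul, TensorProduct.smul_tmul']
    congr 1
    show s • (Ideal.Quotient.mk I 1) = _
    rw [← Ideal.Quotient.mk_eq_mk, ← Submodule.Quotient.mk_smul, smul_eq_mul, mul_one]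
    rfl

lemma lTensor_exact_iff (I : Ideal R) {A B C : Type} [AddCommGroup A] [Module R A]
    [AddCommGroup B] [Module R B] [AddCommGroup C] [Module R C] (f : A →ₗ[R] B) (g : B →ₗ[R] C) :
    (∀ t : (R ⧸ I) ⊗[R] B, g.lTensor (R ⧸ I) t = 0 → ∃ s, f.lTensor (R ⧸ I) s = t) ↔
      ∀ y : B, g y ∈ (I • (⊤ : Submodule R C)) → ∃ z, y - f z ∈ (I • (⊤ : Submodule R B)) := by
  constructor
  · intro h y hy
    obtain ⟨s, hs⟩ := h (1 ⊗ₜ y) (by rw [LinearMap.lTensor_tmul]; exact (one_tmul_eq_zero I _).2 hy)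
    obtain ⟨z, rfl⟩ := exists_one_tmul I s
    refine ⟨z, (one_tmul_eq_zero I _).1 ?_⟩
    rw [TensorProduct.tmul_sub, ← hs, LinearMap.lTensor_tmul, sub_self]
  · intro h t ht
    obtain ⟨y, rfl⟩ := exists_one_tmul I t
    obtain ⟨z, hz⟩ := h y ((one_tmul_eq_zero I _).1 ht)
    refine ⟨1 ⊗ₜ z, ?_⟩
    have := (one_tmul_eq_zero I _).2 hz
    rw [TensorProduct.tmul_sub, sub_eq_zero] at this
    rw [LinearMap.lTensor_tmul, this]

lemma tor_iff (I : Ideal R) {N : ModuleCat.{0} R} (P : ProjectiveResolution N) (p : ℕ) :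
    Subsingleton (((Tor (ModuleCat.{0} R) (p + 1)).obj (ModuleCat.of R (R ⧸ I))).obj N) ↔
      ∀ y : P.complex.X (p + 1), (P.complex.d (p + 1) p).hom y ∈
        (I • (⊤ : Submodule R (P.complex.X p))) →
        ∃ z, y - (P.complex.d (p + 1 + 1) (p + 1)).hom z ∈
          (I • (⊤ : Submodule R (P.complex.X (p + 1)))) := by
  rw [← lTensor_exact_iff, ← ModuleCat.isZero_iff_subsingleton]
  rw [Tor_obj, ((P.isoLeftDerivedObj ((MonoidalCategory.tensoringLeft (ModuleCat.{0} R)).obj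
    (ModuleCat.of R (R ⧸ I))) (p + 1))).isZero_iff]
  erw [← HomologicalComplex.exactAt_iff_isZero_homology]
  rw [HomologicalComplex.exactAt_iff' _ (p + 1 + 1) (p + 1) p (by simp) (by simp),
    ShortComplex.moduleCat_exact_iff]
  rfl

theorem tor_iff_ex {m : ℕ} (c : Finset (Fin m) → Fin m → R) (hc : Comm c)
    (hR : ∀ i, 1 ≤ i → Ex c R i) (N : Type) [AddCommGroup N] [Module R N] (p : ℕ) :
    Subsingleton (((Tor (ModuleCat.{0} R) (p + 1)).obj (ModuleCat.of R
      (R ⧸ Ideal.span (Set.range fun i => c {i} i)))).obj (ModuleCat.of R N)) ↔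
      Ex c N (p + 1) := by
  let P := ProjectiveResolution.of (ModuleCat.of R N)
  rw [tor_iff _ P]
  have hproj : ∀ j, Module.Projective R (P.complex.X j) := fun j =>
    (IsProjective.iff_projective (P.complex.X j)).2 (P.projective j)
  symm
  refine balance c hc p N (fun j => P.complex.X j) (P.π.f 0).hom
    (fun j => (P.complex.d (j + 1) j).hom) ?_ ?_ ?_ ?_
  · exact (ModuleCat.epi_iff_surjective (P.π.f 0)).1 inferInstance
  · exact (ShortComplex.ShortExact.moduleCat_exact_iff_function_exact _).1 P.exact₀
  · intro j
    exact (ShortComplex.ShortExact.moduleCat_exact_iff_function_exact _).1 (P.exact_succ j)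
  · intro j i hi
    exact ex_projective c (hR i hi) _

end tor

section taylor

open MvPolynomial

variable {k : Type} [Field k] {n m : ℕ}

lemma forms_irreducible (z : MvPolynomial (Fin n) k) (h : z.IsHomogeneous 1) (h0 : z ≠ 0) :
    Irreducible z := by
  have hd := h.totalDegree h0
  refine irreducible_of_totalDegree_eq_one hd ?_
  intro x hx
  rcases eq_or_ne x 0 with rfl | hx0
  · exact absurd (MvPolynomial.ext _ _ fun i => by simpa using hx i) h0
  · exact isUnit_iff_ne_zero.2 hx0

lemma forms_isRelPrime (z w : MvPolynomial (Fin n) k) (hz : z.IsHomogeneous 1)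
    (hw : w.IsHomogeneous 1) (hz0 : z ≠ 0) (hw0 : w ≠ 0) (h : ∀ a : k, w ≠ a • z) :
    IsRelPrime z w := by
  rw [(forms_irreducible z hz hz0).isRelPrime_iff_not_dvd]
  rintro ⟨y, hy⟩
  have hy0 : y ≠ 0 := by
    rintro rfl
    exact hw0 (by simpa using hy)
  have hd := totalDegree_mul_of_isDomain hz0 hy0
  rw [← hy, hz.totalDegree hz0, hw.totalDegree hw0] at hd
  have hy1 := totalDegree_eq_zero_iff_eq_C.1 (show y.totalDegree = 0 by omega)
  refine h (coeff 0 y) ?_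
  rw [hy, smul_eq_C_mul, mul_comm]
  conv_lhs => rw [hy1]

lemma Lm_dvd {r : ℕ} (Z : Fin r → MvPolynomial (Fin n) k) (a : Fin r → Fin m → ℕ)
    (hrel : ∀ i j, i ≠ j → IsRelPrime (Z i) (Z j)) (σ : Finset (Fin m))
    (t : MvPolynomial (Fin n) k) (h : ∀ j ∈ σ, (∏ i, Z i ^ a i j) ∣ t) :
    Lm Finset.univ a Z σ ∣ t := by
  refine Finset.prod_dvd_of_isRelPrime ?_ ?_
  · intro i _ j _ hij
    exact (hrel i j hij).pow
  · intro i _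
    rcases σ.eq_empty_or_nonempty with rfl | hσ
    · simp
    · obtain ⟨j, hj, hj'⟩ := Finset.exists_mem_eq_sup σ hσ (a i)
      rw [hj']
      exact (Finset.dvd_prod_of_mem (fun i => Z i ^ a i j) (Finset.mem_univ i)).trans (h j hj)

lemma dvd_Lm {r : ℕ} (Z : Fin r → MvPolynomial (Fin n) k) (a : Fin r → Fin m → ℕ)
    (σ : Finset (Fin m)) (j : Fin m) (hj : j ∈ σ) :
    (∏ i, Z i ^ a i j) ∣ Lm Finset.univ a Z σ :=
  Finset.prod_dvd_prod_of_dvd _ _ fun i _ => pow_dvd_pow _ (Finset.le_sup (f := a i) hj)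

lemma comm_of_L {R : Type*} [CommRing R] [IsDomain R] (L : Finset (Fin m) → R)
    (c : Finset (Fin m) → Fin m → R) (hL : ∀ σ, L σ ≠ 0)
    (hc : ∀ τ, ∀ i ∉ τ, c (insert i τ) i * L τ = L (insert i τ)) : Comm c := by
  intro τ i j hi hj hij
  apply mul_right_cancel₀ (hL τ)
  have e1 := hc (insert i τ) j (by simp [hj, hij.symm])
  have e2 := hc (insert j τ) i (by simp [hi, hij])
  rw [← hc τ i hi] at e1
  rw [← hc τ j hj] at e2
  rw [Finset.insert_comm] at e1
  rw [Finset.insert_comm j i]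
  rw [← e2] at e1
  linear_combination e1

lemma ex_L_iff {R : Type*} [CommRing R] [IsDomain R] (L L' : Finset (Fin m) → R)
    (c c' : Finset (Fin m) → Fin m → R) (hL' : ∀ σ, L' σ ≠ 0)
    (hass : ∀ σ, Associated (L' σ) (L σ))
    (hc : ∀ τ, ∀ i ∉ τ, c (insert i τ) i * L τ = L (insert i τ))
    (hc' : ∀ τ, ∀ i ∉ τ, c' (insert i τ) i * L' τ = L' (insert i τ)) (p : ℕ) :
    Ex c R p ↔ Ex c' R p := by
  choose u hu using hass
  have key : ∀ τ, ∀ i ∉ τ, c (insert i τ) i * u τ = u (insert i τ) * c' (insert i τ) i := by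
    intro τ i hi
    apply mul_right_cancel₀ (hL' τ)
    have := hc τ i hi
    rw [← hu, ← hu, ← hc' τ i hi] at this
    linear_combination this
  constructor
  · intro h
    refine ex_rescale c' c (fun σ => ((u σ)⁻¹ : Rˣ)) (fun σ => Units.isUnit _) ?_ h
    intro τ i hi
    rw [Units.mul_inv_eq_iff_eq_mul, mul_assoc, Units.eq_inv_mul_iff_mul_eq, mul_comm,
      key τ i hi, mul_comm]
  · intro h
    refine ex_rescale c c' (fun σ => (u σ : R)) (fun σ => Units.isUnit _) ?_ h
    intro τ i hi
    rw [mul_comm, ← key τ i hi, mul_comm]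

/-- Extension by zero. -/
noncomputable def Ez (p : ℕ) : TaylorMod k n m p →+ (Finset (Fin m) → MvPolynomial (Fin n) k) where
  toFun F σ := if h : σ.card = p then F ⟨σ, h⟩ else 0
  map_zero' := by ext1; simp
  map_add' F G := by
    ext1 σ
    by_cases h : σ.card = p <;> simp [h]

lemma Ez_apply (p : ℕ) (F : TaylorMod k n m p) (σ : Finset (Fin m)) :
    Ez p F σ = if h : σ.card = p then F ⟨σ, h⟩ else 0 := rfl

lemma Ez_supp (p : ℕ) (F : TaylorMod k n m p) : Supp p (Ez p F) := by
  intro σ hσ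
  rw [Ez_apply, dif_neg hσ]

lemma Ez_injective (p : ℕ) : Function.Injective (Ez p : TaylorMod k n m p →+ _) := by
  intro F G h
  ext1 σ
  have := congrFun h σ.1
  rw [Ez_apply, Ez_apply, dif_pos σ.2, dif_pos σ.2] at this
  exact this

lemma Ez_surj (p : ℕ) (f : Finset (Fin m) → MvPolynomial (Fin n) k) (hf : Supp p f) :
    ∃ F : TaylorMod k n m p, Ez p F = f := by
  refine ⟨Finsupp.equivFunOnFinite.symm fun σ => f σ.1, ?_⟩
  ext1 σ
  rw [Ez_apply]
  split_ifs with h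
  · rfl
  · exact (hf σ h).symm

lemma Ez_single (p : ℕ) (σ : {σ : Finset (Fin m) // σ.card = p}) (x : MvPolynomial (Fin n) k)
    (τ : Finset (Fin m)) :
    Ez p (Finsupp.single σ x) τ = if σ.1 = τ then x else 0 := by
  rw [Ez_apply]
  split_ifs with h h' h'
  · subst h'; simp
  · rw [Finsupp.single_apply, if_neg]
    intro h2
    exact h' (by rw [h2])
  · exact absurd (h' ▸ σ.2) h
  · rfl

lemma Ez_taylorD (c : Finset (Fin m) → Fin m → MvPolynomial (Fin n) k) (p : ℕ)
    (F : TaylorMod k n m (p + 1)) :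
    Ez p (taylorD k n m c (p + 1) F) = dT c _ (Ez (p + 1) F) := by
  induction F using Finsupp.induction_linear with
  | zero => rw [map_zero, map_zero, map_zero, map_zero]
  | add F G hF hG => rw [map_add, map_add, map_add, map_add, ← hF, ← hG]
  | single σ x =>
    ext1 τ
    have e1 : taylorD k n m c (p + 1) (Finsupp.single σ x) =
        ∑ i ∈ σ.1.attach, Finsupp.single
          (⟨σ.1.erase i.1, by rw [Finset.card_erase_of_mem i.2, σ.2]; rfl⟩ :
            {σ : Finset (Fin m) // σ.card = p})
          (x * ((-1) ^ (σ.1.filter (fun j => j < i.1)).card * c σ.1 i.1)) := by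
      rw [taylorD, Finsupp.lsum_single, LinearMap.toSpanSingleton_apply, Finset.smul_sum]
      refine Finset.sum_congr rfl fun i _ => ?_
      rw [Finsupp.smul_single, smul_eq_mul]
    have e2 : Ez p (taylorD k n m c (p + 1) (Finsupp.single σ x)) τ =
        ∑ i ∈ σ.1, if σ.1.erase i = τ then
          (x * ((-1) ^ (σ.1.filter (fun j => j < i)).card * c σ.1 i)) else 0 := by
      rw [e1, map_sum, Finset.sum_apply, ← Finset.sum_attach σ.1]
      refine Finset.sum_congr rfl fun i _ => ?_
      rw [Ez_single]
    rw [e2, dT_apply, ← Finset.sum_filter]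
    simp only [Ez_single, smul_ite, smul_zero]
    rw [← Finset.sum_filter]
    refine Finset.sum_congr ?_ ?_
    · ext i
      simp only [Finset.mem_filter, Finset.mem_compl]
      constructor
      · rintro ⟨h1, rfl⟩
        exact ⟨by simp, (Finset.insert_erase h1).symm⟩
      · rintro ⟨h1, h2⟩
        rw [h2]
        exact ⟨Finset.mem_insert_self _ _, Finset.erase_insert h1⟩
    · intro i hi
      simp only [Finset.mem_filter, Finset.mem_compl] at hi
      obtain ⟨h1, h2⟩ := hi
      rw [← h2, sg, h2, Finset.filter_insert, if_neg (lt_irrefl i), zsmul_eq_mul, smul_eq_mul]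
      push_cast
      ring

lemma taylor_exact_iff (c : Finset (Fin m) → Fin m → MvPolynomial (Fin n) k) (hc : Comm c)
    (p : ℕ) (hp : 1 ≤ p) :
    LinearMap.ker (taylorD k n m c p) = LinearMap.range (taylorD k n m c (p + 1)) ↔
      Ex c (MvPolynomial (Fin n) k) p := by
  obtain ⟨q, rfl⟩ : ∃ q, p = q + 1 := ⟨p - 1, by omega⟩
  have hker : ∀ F : TaylorMod k n m (q + 1), F ∈ LinearMap.ker (taylorD k n m c (q + 1)) ↔
      dT c _ (Ez (q + 1) F) = 0 := by
    intro F
    rw [LinearMap.mem_ker, ← Ez_taylorD]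
    constructor
    · intro h; rw [h]; exact map_zero _
    · intro h
      exact Ez_injective q (h.trans (map_zero _).symm)
  constructor
  · intro h f hf hd
    obtain ⟨F, rfl⟩ := Ez_surj (q + 1) f hf
    have h1 : F ∈ LinearMap.range (taylorD k n m c (q + 1 + 1)) := h ▸ (hker F).2 hd
    obtain ⟨G, hG⟩ := h1
    refine ⟨Ez (q + 1 + 1) G, ?_⟩
    rw [← Ez_taylorD, hG]
  · intro h
    ext1 F
    rw [hker]
    constructor
    · intro hF
      obtain ⟨g, hg, hd⟩ := h.exists_supp c (Ez_supp _ F) hF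
      obtain ⟨G, rfl⟩ := Ez_surj (q + 1 + 1) g hg
      refine ⟨G, Ez_injective (q + 1) ?_⟩
      rw [← hd]
      exact Ez_taylorD c (q + 1) G
    · rintro ⟨G, hG⟩
      have := Ez_taylorD c (q + 1) G
      rw [hG] at this
      rw [this, dT_dT c hc]

lemma taylorAug_eq (F : TaylorMod k n m 0) : taylorAug k n m F = Ez 0 F ∅ := by
  induction F using Finsupp.induction_linear with
  | zero => simp
  | add F G hF hG => rw [map_add, map_add, hF, hG]; rfl
  | single σ x =>
    rw [Ez_single, taylorAug, Finsupp.lsum_single, if_pos (Finset.card_eq_zero.1 σ.2)]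
    rfl

lemma taylor_image (c : Finset (Fin m) → Fin m → MvPolynomial (Fin n) k) :
    Submodule.map (taylorAug k n m) (LinearMap.range (taylorD k n m c 1)) =
      Ideal.span (Set.range fun i => c {i} i) := by
  ext x
  have h := mem_smul_top_iff (N := MvPolynomial (Fin n) k) c x
  rw [smul_eq_mul, Ideal.mul_top] at h
  rw [h]
  constructor
  · rintro ⟨_, ⟨F, rfl⟩, rfl⟩
    refine ⟨Ez 1 F, Ez_supp 1 F, ?_⟩
    rw [← Ez_taylorD c 0 F]
    exact (taylorAug_eq _).symm
  · rintro ⟨g, hg, rfl⟩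
    obtain ⟨F, rfl⟩ := Ez_surj 1 g hg
    refine ⟨_, ⟨F, rfl⟩, ?_⟩
    rw [← Ez_taylorD c 0 F]
    exact taylorAug_eq _

theorem taylor_iff {r : ℕ}
    (Q : Fin m → MvPolynomial (Fin n) k)
    (L : Finset (Fin m) → MvPolynomial (Fin n) k)
    (hLdvd : ∀ σ, ∀ i ∈ σ, Q i ∣ L σ)
    (hLlcm : ∀ σ t, (∀ i ∈ σ, Q i ∣ t) → L σ ∣ t)
    (c : Finset (Fin m) → Fin m → MvPolynomial (Fin n) k)
    (hc : ∀ σ, ∀ i ∈ σ, c σ i * L (σ.erase i) = L σ)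
    (Z : Fin r → MvPolynomial (Fin n) k)
    (hZlin : ∀ i, MvPolynomial.IsHomogeneous (Z i) 1)
    (hZ0 : ∀ i, Z i ≠ 0)
    (hZprop : ∀ i j, i ≠ j → ∀ a : k, Z i ≠ a • Z j)
    (a : Fin r → Fin m → ℕ)
    (hQdef : ∀ j, Q j = ∏ i, Z i ^ a i j) :
    IsTaylorResolution k n m Q c ↔
      ∀ p, 1 ≤ p → Ex (cm Finset.univ a Z) (MvPolynomial (Fin n) k) p := by
  have hrel : ∀ i j, i ≠ j → IsRelPrime (Z i) (Z j) := fun i j hij =>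
    forms_isRelPrime _ _ (hZlin i) (hZlin j) (hZ0 i) (hZ0 j) (hZprop j i hij.symm)
  have hLm0 : ∀ σ, Lm Finset.univ a Z σ ≠ 0 := fun σ =>
    Finset.prod_ne_zero_iff.2 fun i _ => pow_ne_zero _ (hZ0 i)
  have hass : ∀ σ, Associated (Lm Finset.univ a Z σ) (L σ) := fun σ =>
    associated_of_dvd_dvd
      (Lm_dvd Z a hrel σ _ fun j hj => hQdef j ▸ hLdvd σ j hj)
      (hLlcm σ _ fun j hj => hQdef j ▸ dvd_Lm Z a σ j hj)
  have hL0 : ∀ σ, L σ ≠ 0 := fun σ => (hass σ).ne_zero_iff.1 (hLm0 σ)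
  have hc1 : ∀ τ, ∀ i ∉ τ, c (insert i τ) i * L τ = L (insert i τ) := by
    intro τ i hi
    have := hc (insert i τ) i (Finset.mem_insert_self _ _)
    rwa [Finset.erase_insert hi] at this
  have hcomm : Comm c := comm_of_L L c hL0 hc1
  have himg : Submodule.map (taylorAug k n m) (LinearMap.range (taylorD k n m c 1)) =
      Ideal.span (Set.range Q) := by
    rw [taylor_image]
    have hu : IsUnit (L ∅) := isUnit_of_dvd_one (hLlcm ∅ 1 (by simp))
    have hcQ : ∀ i, Associated (c {i} i) (Q i) := by
      intro i
      have h1 := hc {i} i (Finset.mem_singleton_self i)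
      have h2 : ({i} : Finset (Fin m)).erase i = ∅ := by simp
      rw [h2] at h1
      have h3 : Associated (c {i} i) (L {i}) := ⟨hu.unit, h1⟩
      refine h3.trans (associated_of_dvd_dvd (hLlcm _ _ ?_) (hLdvd _ _ (by simp)))
      intro j hj
      rw [Finset.mem_singleton.1 hj]
    apply le_antisymm
    · rw [Ideal.span_le]
      rintro _ ⟨i, rfl⟩
      exact Ideal.mem_of_dvd _ (hcQ i).symm.dvd (Ideal.subset_span ⟨i, rfl⟩)
    · rw [Ideal.span_le]
      rintro _ ⟨i, rfl⟩
      exact Ideal.mem_of_dvd _ (hcQ i).dvd (Ideal.subset_span ⟨i, rfl⟩)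
  have hiff : ∀ p, 1 ≤ p →
      (LinearMap.ker (taylorD k n m c p) = LinearMap.range (taylorD k n m c (p + 1)) ↔
        Ex (cm Finset.univ a Z) (MvPolynomial (Fin n) k) p) := fun p hp =>
    (taylor_exact_iff c hcomm p hp).trans
      (ex_L_iff L _ c _ hLm0 hass hc1 (fun τ i hi => cm_insert_mul_Lm _ a Z τ i hi) p)
  constructor
  · rintro ⟨h, -⟩ p hp
    exact (hiff p hp).1 (h p hp)
  · intro h
    exact ⟨fun p hp => (hiff p hp).2 (h p hp), himg⟩

theorem tor_iff_cm {r : ℕ} (a : Fin r → Fin m → ℕ) (p : ℕ) (hp : 1 ≤ p) :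
    Subsingleton
          (((CategoryTheory.Tor (ModuleCat (MvPolynomial (Fin r) k)) p).obj
              (ModuleCat.of (MvPolynomial (Fin r) k)
                (MvPolynomial (Fin r) k ⧸
                  Ideal.span (Set.range fun j =>
                    ∏ i, (MvPolynomial.X i : MvPolynomial (Fin r) k) ^ a i j)))).obj
            (ModuleCat.of (MvPolynomial (Fin r) k)
              (MvPolynomial (Fin r) k ⧸
                Ideal.span (Set.range (MvPolynomial.X :
                  Fin r → MvPolynomial (Fin r) k))))) ↔
    Ex (cm Finset.univ a (X : Fin r → MvPolynomial (Fin r) k))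
        (MvPolynomial (Fin r) k ⧸ Ideal.span (Set.range (X : Fin r → MvPolynomial (Fin r) k))) p := by
  obtain ⟨q, rfl⟩ : ∃ q, p = q + 1 := ⟨p - 1, by omega⟩
  have h := tor_iff_ex (cm Finset.univ a (X : Fin r → MvPolynomial (Fin r) k))
    (cm_comm Finset.univ a _) (fun i hi => ex_mono Finset.univ a id (Set.injOn_id _) i hi)
    (MvPolynomial (Fin r) k ⧸ Ideal.span (Set.range (X : Fin r → MvPolynomial (Fin r) k))) q
  have e : (fun i => cm Finset.univ a (X : Fin r → MvPolynomial (Fin r) k) {i} i) =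
      fun j => ∏ i, (MvPolynomial.X i : MvPolynomial (Fin r) k) ^ a i j := by
    ext1 j
    simp [cm]
  rw [e] at h
  exact h

end taylor

end TaylorAux

open CategoryTheory in
/-- `k` algebraically closed, `E = {Z_1,…,Z_r}` generic pairwise
non-proportional homogeneous linear forms, and each `Q j = ∏ i, Z i ^ a i j`.  With
`S̃ = k[y_1,…,y_r]`, `Q̃ j = ∏ i, y i ^ a i j` and `Ĩ = (Q̃_1,…,Q̃_m)`, the Taylor
complex of `𝒜` is a resolution of `S/I` iff `Tor_p^{S̃}(S̃/Ĩ, k) = 0` for all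
`p ≥ n + 1`, where `k = S̃/(y_1,…,y_r)`. -/
theorem taylor_resolution_iff_tor_vanishing (k : Type) [Field k] [IsAlgClosed k]
    (n m r : ℕ)
    (Q : Fin m → MvPolynomial (Fin n) k)
    (hQ0 : ∀ i, Q i ≠ 0)
    (hQhom : ∀ i, ∃ d, (Q i).IsHomogeneous d)
    (hQdvd : ∀ i j, i ≠ j → ¬ Q i ∣ Q j)
    (L : Finset (Fin m) → MvPolynomial (Fin n) k)
    (hLdvd : ∀ σ, ∀ i ∈ σ, Q i ∣ L σ)
    (hLlcm : ∀ σ t, (∀ i ∈ σ, Q i ∣ t) → L σ ∣ t)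
    (c : Finset (Fin m) → Fin m → MvPolynomial (Fin n) k)
    (hc : ∀ σ, ∀ i ∈ σ, c σ i * L (σ.erase i) = L σ)
    (Z : Fin r → MvPolynomial (Fin n) k)
    (hZlin : ∀ i, MvPolynomial.IsHomogeneous (Z i) 1)
    (hZ0 : ∀ i, Z i ≠ 0)
    (hZprop : ∀ i j, i ≠ j → ∀ a : k, Z i ≠ a • Z j)
    (hZgen : ∀ s : Finset (Fin r), s.card ≤ n →
      LinearIndependent k (fun i : s => Z i.1))
    (a : Fin r → Fin m → ℕ)
    (hQdef : ∀ j, Q j = ∏ i, Z i ^ a i j) :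
    IsTaylorResolution k n m Q c ↔
      ∀ p : ℕ, n + 1 ≤ p →
        Subsingleton
          (((Tor (ModuleCat (MvPolynomial (Fin r) k)) p).obj
              (ModuleCat.of (MvPolynomial (Fin r) k)
                (MvPolynomial (Fin r) k ⧸
                  Ideal.span (Set.range fun j =>
                    ∏ i, (MvPolynomial.X i : MvPolynomial (Fin r) k) ^ a i j)))).obj
            (ModuleCat.of (MvPolynomial (Fin r) k)
              (MvPolynomial (Fin r) k ⧸
                Ideal.span (Set.range (MvPolynomial.X :
                  Fin r → MvPolynomial (Fin r) k))))) := by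
  rw [TaylorAux.taylor_iff Q L hLdvd hLlcm c hc Z hZlin hZ0 hZprop a hQdef,
    TaylorAux.main_iff a Z hZlin hZgen]
  refine forall_congr' fun p => forall_congr' fun hp => ?_
  rw [TaylorAux.residue_iff a Z hZlin, TaylorAux.tor_iff_cm a p (by omega)]
end

section
/- Assume k is algebraically closed and m ≤ n. Let E be a set of pairwise non-proportional homogeneous linear forms in S that is generic, i.e. every subset of E with at most n elements is linearly independent, and suppose each Q_j ∈ 𝒜 is a product of (powers of) elements of E. Then the Taylor complex of 𝒜 is a resolution of S/I. -/
open Finset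

namespace TaylorAux

set_option linter.unusedSectionVars false

section ColonPart

variable {A ι κ : Type} [CommRing A] [DecidableEq ι] [DecidableEq κ]

/-- The monomial with exponent vector `e` in the elements `z i`, `i ∈ E`. -/
def mon (z : ι → A) (E : Finset ι) (e : ι → ℕ) : A := ∏ i ∈ E, z i ^ e i

/-- The ideal generated by the `z i`, `i ∈ F`. -/
def idl (z : ι → A) (F : Finset ι) : Ideal A := Ideal.span (z '' (F : Set ι))

lemma mon_add (z : ι → A) (E : Finset ι) (e f : ι → ℕ) :
    mon z E (e + f) = mon z E e * mon z E f := by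
  simp [mon, pow_add, Finset.prod_mul_distrib]

lemma mon_zero (z : ι → A) (E : Finset ι) : mon z E 0 = 1 := by
  simp [mon]

lemma mon_single (z : ι → A) (E : Finset ι) (t : ι) (ht : t ∈ E) :
    mon z E (Pi.single t 1) = z t := by
  unfold mon
  rw [Finset.prod_eq_single t]
  · simp
  · intro b _ hb
    simp [Pi.single_eq_of_ne hb]
  · intro h; exact absurd ht h

lemma mon_sub_mul (z : ι → A) (E : Finset ι) (e f : ι → ℕ) :
    mon z E (e - f) * mon z E f = mon z E (f ⊔ e) := by
  rw [← mon_add]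
  congr 1
  funext i
  simp only [Pi.add_apply, Pi.sub_apply, Pi.sup_apply]
  rcases le_total (e i) (f i) with h | h
  · rw [sup_eq_left.2 h]; omega
  · rw [sup_eq_right.2 h]; omega

lemma mon_dvd (z : ι → A) (E : Finset ι) {e f : ι → ℕ} (h : e ≤ f) :
    mon z E e ∣ mon z E f := by
  have := mon_sub_mul z E f e
  rw [sup_eq_right.2 h] at this
  exact ⟨_, by rw [← this, mul_comm]⟩

/-- any at most `n` distinct elements form a weakly regular sequence -/
def Reg (z : ι → A) (E : Finset ι) (n : ℕ) : Prop :=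
  ∀ F ⊆ E, ∀ t ∈ E, t ∉ F → F.card < n → ∀ f, z t * f ∈ idl z F → f ∈ idl z F

/-- colon property for at most `N` monomials -/
def Colon (z : ι → A) (E : Finset ι) (n N : ℕ) (κ : Type) : Prop :=
  ∀ F ⊆ E, ∀ (s : Finset κ) (e : κ → ι → ℕ) (u : ι → ℕ),
    s.card ≤ N → s.card + F.card + 1 ≤ n →
    (∀ i ∈ s, ∀ t ∈ F, e i t = 0) → (∀ t ∈ F, u t = 0) →
    ∀ (f : A) (a : κ → A), mon z E u * f - ∑ i ∈ s, a i * mon z E (e i) ∈ idl z F →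
      ∃ b : κ → A, f - ∑ i ∈ s, b i * mon z E (e i - u) ∈ idl z F

/-- lifting of syzygies for at most `N` monomials -/
def Lift (z : ι → A) (E : Finset ι) (n N : ℕ) (κ : Type) : Prop :=
  ∀ F ⊆ E, ∀ (s : Finset κ) (e : κ → ι → ℕ),
    s.card ≤ N → s.card + F.card ≤ n →
    (∀ i ∈ s, ∀ t ∈ F, e i t = 0) →
    ∀ (a : κ → A), ∑ i ∈ s, a i * mon z E (e i) ∈ idl z F →
      ∃ a' : κ → A, (∀ i ∈ s, a i - a' i ∈ idl z F) ∧ ∑ i ∈ s, a' i * mon z E (e i) = 0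

lemma lift_zero (z : ι → A) (E : Finset ι) (n : ℕ) : Lift z E n 0 κ := by
  intro F _ s e hs _ _ a _
  have : s = ∅ := by simpa using hs
  subst this
  exact ⟨a, by simp, by simp⟩

lemma lift_of_colon (z : ι → A) (E : Finset ι) (n N : ℕ) (hC : Colon z E n N κ)
    (hL : Lift z E n N κ) : Lift z E n (N + 1) κ := by
  intro F hF s e hs hn he a ha
  rcases s.eq_empty_or_nonempty with rfl | ⟨l, hl⟩
  · exact ⟨a, by simp, by simp⟩
  obtain ⟨s, hls, rfl⟩ : ∃ s', l ∉ s' ∧ s = insert l s' :=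
    ⟨s.erase l, by simp, by rw [Finset.insert_erase hl]⟩
  rw [Finset.card_insert_of_notMem hls] at hs hn
  rw [Finset.sum_insert hls] at ha
  obtain ⟨g, hg⟩ := hC F hF s e (e l) (by omega) (by omega)
    (fun i hi => he i (Finset.mem_insert_of_mem hi)) (he l (Finset.mem_insert_self _ _))
    (a l) (fun i => - a i) (by
      convert ha using 1
      simp only [neg_mul, Finset.sum_neg_distrib]
      ring)
  have key : ∀ i, g i * mon z E (e i - e l) * mon z E (e l)
      = g i * mon z E (e l - e i) * mon z E (e i) := by
    intro i
    rw [mul_assoc, mul_assoc, mon_sub_mul, mon_sub_mul, sup_comm]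
  obtain ⟨c, hc1, hc2⟩ := hL F hF s e (by omega) (by omega)
    (fun i hi => he i (Finset.mem_insert_of_mem hi))
    (fun i => a i + g i * mon z E (e l - e i)) (by
      have h2 := Ideal.mul_mem_left _ (mon z E (e l)) hg
      have h3 := sub_mem ha h2
      convert h3 using 1
      simp only [add_mul, Finset.sum_add_distrib, ← key, mul_sub, ← Finset.sum_mul]
      ring)
  refine ⟨fun i => if i = l then ∑ i ∈ s, g i * mon z E (e i - e l)
    else c i - g i * mon z E (e l - e i), ?_, ?_⟩
  · intro i hi
    by_cases h : i = l
    · subst h; simpa using hg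
    · have his : i ∈ s := by simpa [h] using hi
      have := hc1 i his
      simp only [h, if_false]
      convert this using 1
      ring
  · rw [Finset.sum_insert hls]
    have hsum : ∀ i ∈ s, (if i = l then ∑ i ∈ s, g i * mon z E (e i - e l)
        else c i - g i * mon z E (e l - e i)) * mon z E (e i) = c i * mon z E (e i)
      - g i * mon z E (e i - e l) * mon z E (e l) := by
      intro i hi
      have : i ≠ l := fun h => hls (h ▸ hi)
      rw [if_neg this, key]; ring
    rw [Finset.sum_congr rfl hsum, Finset.sum_sub_distrib, hc2]
    simp only [if_true, Finset.sum_mul]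
    ring

lemma colon_single (z : ι → A) (E : Finset ι) (n N : ℕ) (hR : Reg z E n)
    (hL : Lift z E n N κ) (F : Finset ι) (hF : F ⊆ E) (s : Finset κ) (e : κ → ι → ℕ)
    (hs : s.card ≤ N) (hn : s.card + F.card + 1 ≤ n)
    (he : ∀ i ∈ s, ∀ t ∈ F, e i t = 0) (t : ι) (htE : t ∈ E) (htF : t ∉ F)
    (f : A) (a : κ → A) (ha : z t * f - ∑ i ∈ s, a i * mon z E (e i) ∈ idl z F) :
    ∃ b : κ → A, f - ∑ i ∈ s, b i * mon z E (e i - Pi.single t 1) ∈ idl z F := by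
  have hins : idl z (insert t F) = Ideal.span {z t} ⊔ idl z F := by
    unfold idl
    rw [Finset.coe_insert, Set.image_insert_eq, Ideal.span_insert]
  have hle : idl z F ≤ idl z (insert t F) := hins ▸ le_sup_right
  have hzt : z t ∈ idl z (insert t F) := Ideal.subset_span ⟨t, by simp, rfl⟩
  have hpos : ∀ i, e i t ≠ 0 → mon z E (e i) = z t * mon z E (e i - Pi.single t 1) := by
    intro i hi
    have := mon_sub_mul z E (e i) (Pi.single t 1)
    rw [mon_single z E t htE] at this
    rw [mul_comm, this]
    congr 1
    symm
    apply sup_eq_right.2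
    intro x
    by_cases hx : x = t
    · subst hx; simp; omega
    · simp [hx]
  have hsub : ∀ i, e i t = 0 → e i - Pi.single t 1 = e i := by
    intro i hi
    funext x
    by_cases hx : x = t
    · subst hx; simp [hi]
    · simp [hx]
  have hsplit := Finset.sum_filter_add_sum_filter_not s (fun i => e i t = 0)
    (fun i => a i * mon z E (e i))
  have hq : ∑ i ∈ s with ¬ e i t = 0, a i * mon z E (e i)
      = z t * ∑ i ∈ s with ¬ e i t = 0, a i * mon z E (e i - Pi.single t 1) := by
    rw [Finset.mul_sum]
    refine Finset.sum_congr rfl fun i hi => ?_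
    rw [hpos i (by simpa using (Finset.mem_filter.1 hi).2)]
    ring
  have hcard := Finset.card_filter_le s (fun i => e i t = 0)
  obtain ⟨a', h1, h2⟩ := hL (insert t F) (Finset.insert_subset htE hF)
    (s.filter fun i => e i t = 0) e (by omega)
    (by rw [Finset.card_insert_of_notMem htF]; omega)
    (by
      intro i hi x hx
      rw [Finset.mem_filter] at hi
      rcases Finset.mem_insert.1 hx with rfl | hx
      · exact hi.2
      · exact he i hi.1 x hx) a (by
      have h4 := hle ha
      rw [← hsplit, hq] at h4
      have h5 := Ideal.mul_mem_right
        (f - ∑ i ∈ s with ¬ e i t = 0, a i * mon z E (e i - Pi.single t 1)) _ hzt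
      have h6 := sub_mem h5 h4
      convert h6 using 1
      ring)
  have h3 : ∀ i : κ, ∃ c : A, i ∈ s.filter (fun i => e i t = 0) →
      a i - a' i - z t * c ∈ idl z F := by
    intro i
    by_cases hi : i ∈ s.filter (fun i => e i t = 0)
    · have := h1 i hi
      rw [hins, Submodule.mem_sup] at this
      obtain ⟨y, hy, w, hw, hyw⟩ := this
      obtain ⟨c, rfl⟩ := Ideal.mem_span_singleton.1 hy
      exact ⟨c, fun _ => by rw [← hyw]; simpa using hw⟩
    · exact ⟨0, fun h => absurd h hi⟩
  choose c hc using h3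
  refine ⟨fun i => if e i t = 0 then c i else a i, ?_⟩
  apply hR F hF t htE htF (by omega)
  rw [← Finset.sum_filter_add_sum_filter_not s (fun i => e i t = 0)]
  have e1 : ∑ i ∈ s with e i t = 0,
      (if e i t = 0 then c i else a i) * mon z E (e i - Pi.single t 1)
      = ∑ i ∈ s with e i t = 0, c i * mon z E (e i) := by
    refine Finset.sum_congr rfl fun i hi => ?_
    have := (Finset.mem_filter.1 hi).2
    rw [if_pos this, hsub i this]
  have e2 : ∑ i ∈ s with ¬ e i t = 0,
      (if e i t = 0 then c i else a i) * mon z E (e i - Pi.single t 1)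
      = ∑ i ∈ s with ¬ e i t = 0, a i * mon z E (e i - Pi.single t 1) := by
    refine Finset.sum_congr rfl fun i hi => ?_
    have := (Finset.mem_filter.1 hi).2
    rw [if_neg this]
  rw [e1, e2]
  have h7 : ∑ i ∈ s with e i t = 0, (a i - a' i - z t * c i) * mon z E (e i) ∈ idl z F :=
    sum_mem fun i hi => Ideal.mul_mem_right _ _ (hc i hi)
  have h8 := add_mem ha h7
  convert h8 using 1
  rw [← hsplit, hq]
  simp only [sub_mul, Finset.sum_sub_distrib, h2, mul_assoc, ← Finset.mul_sum]
  ring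

lemma colon_of_lift (z : ι → A) (E : Finset ι) (n N : ℕ) (hR : Reg z E n)
    (hL : Lift z E n N κ) : Colon z E n N κ := by
  intro F hF s e u hs hn he hu f a ha
  obtain ⟨M, hM⟩ : ∃ M, M = ∑ i ∈ E, u i := ⟨_, rfl⟩
  induction M generalizing u e f a with
  | zero =>
    have h0 : ∀ i ∈ E, u i = 0 := by
      intro i hi
      exact (Finset.sum_eq_zero_iff.1 hM.symm) i hi
    have hu1 : mon z E u = 1 := by
      unfold mon
      exact Finset.prod_eq_one fun i hi => by rw [h0 i hi, pow_zero]
    refine ⟨a, ?_⟩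
    rw [hu1, one_mul] at ha
    have hm : ∀ i, mon z E (e i - u) = mon z E (e i) := by
      intro i
      unfold mon
      refine Finset.prod_congr rfl fun x hx => ?_
      simp [h0 x hx]
    simpa only [hm] using ha
  | succ M ih =>
    obtain ⟨t, htE, ht⟩ : ∃ t ∈ E, u t ≠ 0 := by
      by_contra! h
      rw [Finset.sum_eq_zero h] at hM
      omega
    have hut : u = Pi.single t 1 + (u - Pi.single t 1) := by
      funext x
      by_cases hx : x = t
      · subst hx; simp; omega
      · simp [hx]
    obtain ⟨v, hv⟩ : ∃ v, v = u - Pi.single t 1 := ⟨_, rfl⟩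
    rw [← hv] at hut
    have htF : t ∉ F := fun h => ht (hu t h)
    rw [hut, mon_add, mon_single z E t htE, mul_assoc] at ha
    obtain ⟨b, hb⟩ := colon_single z E n N hR hL F hF s e hs hn he t htE htF _ a ha
    obtain ⟨b', hb'⟩ := ih (fun i => e i - Pi.single t 1) v
      (fun i hi x hx => by simp [he i hi x hx])
      (fun x hx => by rw [hv]; simp [hu x hx]) f b hb (by
        rw [hut] at hM
        simp only [Pi.add_apply, Finset.sum_add_distrib] at hM
        rw [Finset.sum_pi_single' ] at hM
        simp only [htE, if_true] at hM
        omega)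
    refine ⟨b', ?_⟩
    rw [hut]
    simpa only [tsub_tsub] using hb'

lemma colon_all (z : ι → A) (E : Finset ι) (n : ℕ) (hR : Reg z E n) (N : ℕ) :
    Colon z E n N κ := by
  have : Lift z E n N κ := by
    induction N with
    | zero => exact lift_zero z E n
    | succ N ih => exact lift_of_colon z E n N (colon_of_lift z E n N hR ih) ih
  exact colon_of_lift z E n N hR this

/-- Distributivity: the intersection of a principal monomial ideal with a monomial ideal. -/
lemma distrib (z : ι → A) (E : Finset ι) (n : ℕ) (hR : Reg z E n) (s : Finset κ)
    (hs : s.card + 1 ≤ n) (e : κ → ι → ℕ) (u : ι → ℕ) (g : A) (hg : mon z E u ∣ g)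
    (a : κ → A) (ha : ∀ i ∈ s, mon z E (e i) ∣ a i) (hga : g = ∑ i ∈ s, a i) :
    ∃ w : κ → A, (∀ i, mon z E (u ⊔ e i) ∣ w i) ∧ g = ∑ i ∈ s, w i := by
  obtain ⟨f, rfl⟩ := hg
  have : ∀ i, ∃ b, i ∈ s → a i = b * mon z E (e i) := by
    intro i
    by_cases hi : i ∈ s
    · obtain ⟨b, hb⟩ := ha i hi
      exact ⟨b, fun _ => by rw [hb, mul_comm]⟩
    · exact ⟨0, fun h => absurd h hi⟩
  choose b hb using this
  obtain ⟨b', hb'⟩ := colon_all (κ := κ) z E n hR s.card ∅ (by simp) s e u le_rfl (by simpa using hs)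
    (by simp) (by simp) f b (by
      rw [hga, Finset.sum_congr rfl hb, sub_self]; exact zero_mem _)
  have h0 : f = ∑ i ∈ s, b' i * mon z E (e i - u) := by
    simpa [idl, sub_eq_zero] using hb'
  refine ⟨fun i => b' i * mon z E (u ⊔ e i), fun i => Dvd.intro_left _ rfl, ?_⟩
  rw [h0, Finset.mul_sum]
  refine Finset.sum_congr rfl fun i _ => ?_
  simp only [← mon_sub_mul]; ring

end ColonPart

section Boundary

variable {A : Type} [CommRing A] {κ : Type} [LinearOrder κ]

/-- simplicial boundary of functions on subsets of `s` -/
def bd (s : Finset κ) (g : Finset κ → A) (τ : Finset κ) : A :=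
  ∑ i ∈ s \ τ, (-1) ^ (τ.filter (fun j => j < i)).card * g (insert i τ)

lemma bd_congr (s : Finset κ) (g h : Finset κ → A) (τ : Finset κ) (hτ : τ ⊆ s)
    (H : ∀ σ ⊆ s, σ.Nonempty → g σ = h σ) : bd s g τ = bd s h τ := by
  unfold bd
  refine Finset.sum_congr rfl fun i hi => ?_
  rw [H _ (Finset.insert_subset (Finset.mem_sdiff.1 hi).1 hτ) (by simp)]

lemma bd_add (s : Finset κ) (g h : Finset κ → A) (τ : Finset κ) :
    bd s (fun σ => g σ + h σ) τ = bd s g τ + bd s h τ := by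
  simp [bd, mul_add, Finset.sum_add_distrib]

lemma bd_neg (s : Finset κ) (g : Finset κ → A) (τ : Finset κ) :
    bd s (fun σ => - g σ) τ = - bd s g τ := by
  simp [bd]

lemma bd_insert_left (s : Finset κ) (l : κ) (hl : ∀ x ∈ s, l < x) (g : Finset κ → A)
    (τ : Finset κ) (hτ : τ ⊆ s) :
    bd (insert l s) g (insert l τ) = - bd s (fun σ => g (insert l σ)) τ := by
  have hls : l ∉ s := fun h => lt_irrefl _ (hl l h)
  unfold bd
  have : insert l s \ insert l τ = s \ τ := by
    ext x
    simp only [Finset.mem_sdiff, Finset.mem_insert]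
    constructor
    · rintro ⟨h1 | h1, h2⟩ <;> tauto
    · rintro ⟨h1, h2⟩
      exact ⟨Or.inr h1, by rintro (rfl | h) <;> tauto⟩
  rw [this, ← Finset.sum_neg_distrib]
  refine Finset.sum_congr rfl fun i hi => ?_
  have hi' := (Finset.mem_sdiff.1 hi).1
  rw [Finset.filter_insert, if_pos (hl i hi'), Finset.card_insert_of_notMem
    (fun h => hls (hτ (Finset.mem_filter.1 h).1)), Finset.insert_comm, pow_succ]
  ring

lemma bd_insert (s : Finset κ) (l : κ) (hl : ∀ x ∈ s, l < x) (g : Finset κ → A)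
    (τ : Finset κ) (hτ : τ ⊆ s) :
    bd (insert l s) g τ = g (insert l τ) + bd s g τ := by
  have hls : l ∉ s := fun h => lt_irrefl _ (hl l h)
  unfold bd
  rw [Finset.insert_sdiff_of_notMem _ (fun h => hls (hτ h)), Finset.sum_insert
    (fun h => hls (Finset.mem_sdiff.1 h).1), Finset.filter_false_of_mem
    (fun x hx => not_lt.2 (hl x (hτ hx)).le)]
  simp

lemma subset_insert_cases (s : Finset κ) (l : κ) (τ : Finset κ) (hτ : τ ⊆ insert l s) :
    τ ⊆ s ∨ ∃ τ' ⊆ s, τ = insert l τ' := by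
  by_cases h : l ∈ τ
  · right
    exact ⟨τ.erase l, by rwa [← Finset.subset_insert_iff], by rw [Finset.insert_erase h]⟩
  · left
    exact (Finset.subset_insert_iff_of_notMem h).1 hτ

lemma bd_bd (s : Finset κ) (g : Finset κ → A) (τ : Finset κ) (hτ : τ ⊆ s) :
    bd s (bd s g) τ = 0 := by
  induction s using Finset.induction_on_min generalizing g τ with
  | empty => simp [bd]
  | insert l s hl ih =>
    have key : ∀ (g : Finset κ → A) (τ : Finset κ), τ ⊆ s → bd s (fun σ => bd (insert l s) g (insert l σ)) τ = 0 := by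
      intro g τ hτ
      rw [bd_congr s _ (fun σ => - bd s (fun σ => g (insert l σ)) σ) τ hτ
        (fun σ hσ _ => bd_insert_left s l hl g σ hσ), bd_neg, ih _ _ hτ, neg_zero]
    rcases subset_insert_cases s l τ hτ with h | ⟨τ', h, rfl⟩
    · rw [bd_insert s l hl _ τ h, bd_insert_left s l hl g τ h,
        bd_congr s _ (fun σ => g (insert l σ) + bd s g σ) τ h
          (fun σ hσ _ => bd_insert s l hl g σ hσ), bd_add, ih g τ h]
      ring
    · rw [bd_insert_left s l hl _ τ' h, key g τ' h, neg_zero]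

variable {ι : Type} [DecidableEq ι]

theorem exact_aux (z : ι → A) (E : Finset ι) (n : ℕ) (hR : Reg z E n) (e : κ → ι → ℕ)
    (s : Finset κ) (hs : s.card ≤ n) (u : ι → ℕ) (g : Finset κ → A)
    (hg : ∀ σ ⊆ s, mon z E (u ⊔ σ.sup e) ∣ g σ)
    (hbd : ∀ τ ⊆ s, bd s g τ = 0) (h0 : g ∅ = 0) :
    ∃ h : Finset κ → A, (∀ σ ⊆ s, mon z E (u ⊔ σ.sup e) ∣ h σ) ∧
      ∀ τ ⊆ s, bd s h τ = g τ := by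
  induction s using Finset.induction_on_min generalizing u g with
  | empty =>
    refine ⟨fun _ => 0, by simp, ?_⟩
    intro τ hτ
    have : τ = ∅ := by simpa using hτ
    subst this
    simp [bd, h0]
  | insert l s hl ih =>
    have hls : l ∉ s := fun h => lt_irrefl _ (hl l h)
    rw [Finset.card_insert_of_notMem hls] at hs
    have hsub : ∀ {σ : Finset κ}, σ ⊆ s → σ ⊆ insert l s :=
      fun h => h.trans (Finset.subset_insert _ _)
    have g1div : ∀ σ ⊆ s, mon z E ((u ⊔ e l) ⊔ σ.sup e) ∣ g (insert l σ) := by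
      intro σ hσ
      have := hg (insert l σ) (Finset.insert_subset_insert _ hσ)
      rwa [Finset.sup_insert, ← sup_assoc] at this
    have hb1 : ∀ τ ⊆ s, bd s (fun σ => g (insert l σ)) τ = 0 := by
      intro τ hτ
      have := hbd (insert l τ) (Finset.insert_subset_insert _ hτ)
      rw [bd_insert_left s l hl g τ hτ] at this
      simpa using this
    have hb0 : ∀ τ ⊆ s, g (insert l τ) + bd s g τ = 0 := by
      intro τ hτ
      rw [← bd_insert s l hl g τ hτ]
      exact hbd τ (hsub hτ)
    -- correct the value at the empty set
    obtain ⟨w, hw1, hw2⟩ := distrib z E n hR s (by omega) (fun i => u ⊔ e i) (u ⊔ e l)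
      (g {l}) (by simpa using g1div ∅ (by simp)) (fun i => - g {i})
      (by
        intro i hi
        rw [dvd_neg]
        simpa using hg {i} (by simp [hi]))
      (by
        have := hb0 ∅ (by simp)
        simp only [bd, Finset.sdiff_empty, Finset.filter_empty, Finset.card_empty, pow_zero,
          one_mul, insert_empty_eq] at this
        rw [Finset.sum_neg_distrib]
        exact eq_neg_of_add_eq_zero_left this)
    let q : Finset κ → A := fun σ => if h : σ.card = 1 then
      w ((Finset.card_eq_one.1 h).choose) else 0
    have hq1 : ∀ i, q {i} = w i := by
      intro i
      have h : ({i} : Finset κ).card = 1 := by simp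
      have h2 := (Finset.card_eq_one.1 h).choose_spec
      simp only [q, h, dif_pos]
      congr 1
      exact (Finset.singleton_injective h2).symm
    have hq0 : ∀ σ : Finset κ, σ.card ≠ 1 → q σ = 0 := fun σ h => by simp [q, h]
    have hqd : ∀ σ : Finset κ, mon z E ((u ⊔ e l) ⊔ σ.sup e) ∣ q σ := by
      intro σ
      by_cases h : σ.card = 1
      · obtain ⟨i, rfl⟩ := Finset.card_eq_one.1 h
        rw [hq1, Finset.sup_singleton]
        refine dvd_trans (mon_dvd z E ?_) (hw1 i)
        refine sup_le le_sup_left (le_sup_of_le_right le_sup_right)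
      · rw [hq0 σ h]; exact dvd_zero _
    have hqb0 : bd s q ∅ = g {l} := by
      rw [hw2]
      simp [bd, hq1]
    have hqb : ∀ τ : Finset κ, τ.Nonempty → bd s q τ = 0 := by
      intro τ hτ
      unfold bd
      refine Finset.sum_eq_zero fun i hi => ?_
      rw [hq0, mul_zero]
      rw [Finset.card_insert_of_notMem (Finset.mem_sdiff.1 hi).2]
      have := hτ.card_pos
      omega
    obtain ⟨h1, hh1, hh1'⟩ := ih (by omega) (u ⊔ e l)
      (fun σ => g (insert l σ) + - bd s q σ)
      (by
        intro σ hσ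
        refine dvd_add (g1div σ hσ) ((dvd_neg).2 ?_)
        unfold bd
        refine Finset.dvd_sum fun i _ => Dvd.dvd.mul_left (dvd_trans (mon_dvd z E ?_) (hqd _)) _
        exact sup_le_sup le_rfl (Finset.sup_mono (Finset.subset_insert _ _)))
      (by
        intro τ hτ
        rw [bd_add, hb1 τ hτ, bd_neg, bd_bd s q τ hτ]; simp)
      (by simp [hqb0])
    -- the corrected primitive of `g1`
    let r : Finset κ → A := fun σ => if σ = ∅ then 0 else h1 σ + q σ
    have hr0 : r ∅ = 0 := by simp [r]
    have hrd : ∀ σ ⊆ s, mon z E ((u ⊔ e l) ⊔ σ.sup e) ∣ r σ := by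
      intro σ hσ
      by_cases h : σ = ∅
      · subst h; rw [hr0]; exact dvd_zero _
      · simp only [r, h, if_false]
        exact dvd_add (hh1 σ hσ) (hqd σ)
    have hrb : ∀ τ ⊆ s, bd s r τ = g (insert l τ) := by
      intro τ hτ
      rw [bd_congr s r (fun σ => h1 σ + q σ) τ hτ
        (fun σ _ hne => by simp [r, hne.ne_empty]), bd_add, hh1' τ hτ]
      ring
    obtain ⟨h2, hh2, hh2'⟩ := ih (by omega) u (fun σ => g σ + r σ)
      (by
        intro σ hσ
        refine dvd_add (hg σ (hsub hσ)) (dvd_trans (mon_dvd z E ?_) (hrd σ hσ))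
        exact sup_le_sup le_sup_left le_rfl)
      (by
        intro τ hτ
        rw [bd_add, hrb τ hτ, add_comm, hb0 τ hτ])
      (by simp [h0, hr0])
    refine ⟨fun σ => if l ∈ σ then - r (σ.erase l) else h2 σ, ?_, ?_⟩
    · intro σ hσ
      rcases subset_insert_cases s l σ hσ with h | ⟨σ', h, rfl⟩
      · have : l ∉ σ := fun hh => hls (h hh)
        simp only [this, if_false]
        exact hh2 σ h
      · have : l ∉ σ' := fun hh => hls (h hh)
        simp only [Finset.mem_insert_self, if_true, Finset.erase_insert this]
        rw [Finset.sup_insert, ← sup_assoc, dvd_neg]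
        exact hrd σ' h
    · have c1 : ∀ τ ⊆ s, bd s (fun σ => (fun σ => if l ∈ σ then - r (σ.erase l) else h2 σ)
          (insert l σ)) τ = - g (insert l τ) := by
        intro τ hτ
        rw [bd_congr s _ (fun σ => - r σ) τ hτ, bd_neg, hrb τ hτ]
        intro σ hσ _
        have : l ∉ σ := fun hh => hls (hσ hh)
        simp [Finset.erase_insert this]
      intro τ hτ
      rcases subset_insert_cases s l τ hτ with h | ⟨τ', h, rfl⟩
      · have hlt : l ∉ τ := fun hh => hls (h hh)
        rw [bd_insert s l hl _ τ h, bd_congr s _ h2 τ h, hh2' τ h]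
        · simp [Finset.erase_insert hlt]
        · intro σ hσ _
          have : l ∉ σ := fun hh => hls (hσ hh)
          simp [this]
      · rw [bd_insert_left s l hl _ τ' h, c1 τ' h, neg_neg]

end Boundary

section Poly

open MvPolynomial

lemma X_regular {B k : Type} [Field k] (s : Set B) (t : B) (ht : t ∉ s) (f : MvPolynomial B k)
    (h : X t * f ∈ Ideal.span (X '' s : Set (MvPolynomial B k))) :
    f ∈ Ideal.span (X '' s : Set (MvPolynomial B k)) := by
  classical
  rw [mem_ideal_span_X_image] at h ⊢
  intro m hm
  obtain ⟨i, his, hi⟩ := h (Finsupp.single t 1 + m) (by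
    rw [mem_support_iff, coeff_X_mul]
    exact mem_support_iff.1 hm)
  refine ⟨i, his, ?_⟩
  have : t ≠ i := fun h => ht (h ▸ his)
  simpa [Finsupp.single_apply, this] using hi

lemma reg_linear (k : Type) [Field k] (n : ℕ) [DecidableEq (MvPolynomial (Fin n) k)]
    (E : Finset (MvPolynomial (Fin n) k))
    (hElin : ∀ z ∈ E, MvPolynomial.IsHomogeneous z 1)
    (hEgen : ∀ s ⊆ E, s.card ≤ n →
      LinearIndependent k (fun z : s => (z : MvPolynomial (Fin n) k))) :
    Reg (fun x : MvPolynomial (Fin n) k => x) E n := by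
  intro F hF t htE htF hn f hf
  have hsE : insert t F ⊆ E := Finset.insert_subset htE hF
  have hli := hEgen (insert t F) hsE
    (by rw [Finset.card_insert_of_notMem htF]; omega)
  let V := homogeneousSubmodule (Fin n) k 1
  let v : {x // x ∈ insert t F} → V := fun z => ⟨z.1, hElin z.1 (hsE z.2)⟩
  have hv : LinearIndependent k v := by
    apply LinearIndependent.of_comp V.subtype
    exact hli
  have hv' : LinearIndepOn k id (Set.range v) := hv.linearIndepOn_id
  let b := Module.Basis.extend hv'
  let lin := b.constr k (fun j => (X j : MvPolynomial _ k))
  let φ := aeval (R := k) (fun j => ((b j : V) : MvPolynomial (Fin n) k))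
  let ψ : MvPolynomial (Fin n) k →ₐ[k] _ := aeval (R := k) (fun i => lin ⟨X i, isHomogeneous_X k i⟩)
  have h1 : ∀ x : V, φ (lin x) = x := by
    have : φ.toLinearMap ∘ₗ lin = V.subtype := by
      apply b.ext
      intro j
      simp [lin, φ]
    intro x
    exact LinearMap.congr_fun this x
  have h2 : ∀ x, φ (ψ x) = x := by
    have : φ.comp ψ = AlgHom.id k _ := by
      apply MvPolynomial.algHom_ext
      intro i
      simp only [ψ, AlgHom.comp_apply, aeval_X, AlgHom.id_apply]
      exact h1 _
    intro x
    exact AlgHom.congr_fun this x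
  have h3 : ∀ x : V, ψ x = lin x := by
    intro ⟨x, hx⟩
    have hx' : x ∈ Submodule.span k (Set.range (X : Fin n → MvPolynomial (Fin n) k)) := by
      rw [← homogeneousSubmodule_one_eq_span_X]; exact hx
    have : ∀ x, x ∈ Submodule.span k (Set.range (X : Fin n → MvPolynomial (Fin n) k)) →
        ∀ hx : x ∈ V, ψ x = lin ⟨x, hx⟩ := by
      intro x hx
      induction hx using Submodule.span_induction with
      | mem x h =>
        obtain ⟨i, rfl⟩ := h
        intro hx
        simp [ψ]
      | zero =>
        intro hx
        rw [map_zero]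
        exact (map_zero lin).symm
      | add x y hx hy h h' =>
        intro hxy
        rw [← homogeneousSubmodule_one_eq_span_X] at hx hy
        rw [map_add, h hx, h' hy, ← map_add]
        rfl
      | smul a x hx h =>
        intro _
        rw [← homogeneousSubmodule_one_eq_span_X] at hx
        rw [map_smul, h hx, ← map_smul]
        rfl
    exact this x hx' hx
  -- indices of the basis
  have h4 : ∀ z ∈ insert t F, ∃ j, ((b j : V) : MvPolynomial (Fin n) k) = z ∧ ψ z = X j := by
    intro z hz
    have hm : v ⟨z, hz⟩ ∈ hv'.extend (Set.subset_univ _) :=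
      hv'.subset_extend _ ⟨_, rfl⟩
    have hb : b ⟨_, hm⟩ = v ⟨z, hz⟩ := Module.Basis.extend_apply_self _ _
    refine ⟨⟨_, hm⟩, by rw [hb], ?_⟩
    have := h3 (v ⟨z, hz⟩)
    rw [← hb] at this
    simp only [lin, Module.Basis.constr_basis] at this
    rw [← this, hb]
  obtain ⟨jt, hjt, hjt'⟩ := h4 t (by simp)
  let s : Set _ := {j | ((b j : V) : MvPolynomial (Fin n) k) ∈ F}
  have h5 : ψ f ∈ Ideal.span (X '' s : Set (MvPolynomial _ k)) := by
    apply X_regular s jt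
    · intro h
      apply htF
      rw [← hjt]; exact h
    · rw [← hjt', ← map_mul]
      have := Ideal.mem_map_of_mem ψ hf
      unfold idl at this
      rw [Ideal.map_span] at this
      refine Ideal.span_mono ?_ this
      rintro _ ⟨_, ⟨z, hz, rfl⟩, rfl⟩
      obtain ⟨j, hj, hj'⟩ := h4 z (by simp [Finset.mem_coe.1 hz])
      refine ⟨j, ?_, hj'.symm⟩
      change _ ∈ F
      rw [hj]; exact hz
  have h6 := Ideal.mem_map_of_mem φ h5
  rw [h2, Ideal.map_span] at h6
  refine Ideal.span_mono ?_ h6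
  rintro _ ⟨_, ⟨j, hj, rfl⟩, rfl⟩
  refine ⟨_, hj, ?_⟩
  simp [φ]

end Poly

section Final

variable {k : Type} [Field k] {n m : ℕ}

/-- extension by zero of a Taylor chain to all subsets -/
noncomputable def ev (p : ℕ) (f : TaylorMod k n m p) (σ : Finset (Fin m)) : MvPolynomial (Fin n) k :=
  if h : σ.card = p then f ⟨σ, h⟩ else 0

lemma ev_add (p : ℕ) (f g : TaylorMod k n m p) (σ : Finset (Fin m)) :
    ev p (f + g) σ = ev p f σ + ev p g σ := by
  unfold ev; split_ifs <;> simp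

lemma ev_single (p : ℕ) (σ : {σ : Finset (Fin m) // σ.card = p}) (a : MvPolynomial (Fin n) k)
    (τ : Finset (Fin m)) :
    ev p (Finsupp.single σ a : TaylorMod k n m p) τ = if τ = σ.1 then a else 0 := by
  unfold ev
  by_cases h : τ = σ.1
  · subst h; simp [σ.2]
  · rw [if_neg h]
    split_ifs with h'
    · rw [Finsupp.single_apply, if_neg]
      intro h2; exact h (by rw [h2])
    · rfl

lemma taylorD_ev (c : Finset (Fin m) → Fin m → MvPolynomial (Fin n) k) (p : ℕ)
    (f : TaylorMod k n m (p + 1)) (τ : Finset (Fin m)) :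
    ev p (taylorD k n m c (p + 1) f) τ = ∑ i ∈ univ \ τ,
      (-1) ^ (τ.filter (fun j => j < i)).card * (c (insert i τ) i * ev (p + 1) f (insert i τ)) := by
  induction f using Finsupp.induction_linear with
  | zero =>
    rw [map_zero]
    simp [ev]
  | add f g hf hg =>
    rw [map_add]
    simp only [ev_add, mul_add, Finset.sum_add_distrib]
    rw [hf, hg]
  | single σ a =>
    have h1 : taylorD k n m c (p + 1) (Finsupp.single σ a) = a • (∑ i ∈ σ.1.attach,
        Finsupp.single
          (⟨σ.1.erase i.1, by rw [Finset.card_erase_of_mem i.2, σ.2]⟩ :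
            {σ : Finset (Fin m) // σ.card = p + 1 - 1})
          ((-1) ^ (σ.1.filter (fun j => j < i.1)).card * c σ.1 i.1)) := by
      unfold taylorD
      rw [Finsupp.lsum_single, LinearMap.toSpanSingleton_apply]
    have h2 : ev p (taylorD k n m c (p + 1) (Finsupp.single σ a)) τ
        = ∑ i ∈ σ.1, if σ.1.erase i = τ then
          a * ((-1) ^ (σ.1.filter (fun j => j < i)).card * c σ.1 i) else 0 := by
      rw [h1, ← Finset.sum_attach σ.1]
      unfold ev
      split_ifs with h
      · simp only [Finsupp.smul_apply, Finsupp.finsetSum_apply, smul_eq_mul, Finset.mul_sum]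
        refine Finset.sum_congr rfl fun i hi => ?_
        simp only [Finsupp.single_apply, Subtype.mk.injEq]
        split_ifs <;> simp
      · symm
        refine Finset.sum_eq_zero fun i hi => ?_
        rw [if_neg]
        rintro rfl
        apply h
        rw [Finset.card_erase_of_mem i.2, σ.2]
        rfl
    rw [h2]
    simp only [ev_single]
    rw [← Finset.sum_filter]
    have h3 : ∀ i, ((-1) ^ (τ.filter (fun j => j < i)).card *
        (c (insert i τ) i * if insert i τ = σ.1 then a else 0) : MvPolynomial (Fin n) k)
        = if insert i τ = σ.1 then (-1) ^ (τ.filter (fun j => j < i)).card *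
        (c (insert i τ) i * a) else 0 := by
      intro i; split_ifs <;> simp
    simp only [h3]
    rw [← Finset.sum_filter]
    refine Finset.sum_congr ?_ ?_
    · ext i
      simp only [Finset.mem_filter, Finset.mem_sdiff, Finset.mem_univ, true_and]
      constructor
      · rintro ⟨hi, rfl⟩
        exact ⟨by simp, Finset.insert_erase hi⟩
      · rintro ⟨hi, h⟩
        rw [← h]
        exact ⟨by simp, Finset.erase_insert hi⟩
    · intro i hi
      simp only [Finset.mem_filter, Finset.mem_sdiff, Finset.mem_univ, true_and] at hi
      obtain ⟨hi, h⟩ := hi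
      rw [← h, Finset.filter_insert, if_neg (lt_irrefl _)]
      ring

lemma key_bd (L : Finset (Fin m) → MvPolynomial (Fin n) k)
    (c : Finset (Fin m) → Fin m → MvPolynomial (Fin n) k)
    (hc : ∀ σ, ∀ i ∈ σ, c σ i * L (σ.erase i) = L σ) (p : ℕ)
    (f : TaylorMod k n m (p + 1)) (τ : Finset (Fin m)) :
    L τ * ev p (taylorD k n m c (p + 1) f) τ
      = bd univ (fun σ => L σ * ev (p + 1) f σ) τ := by
  rw [taylorD_ev, bd, Finset.mul_sum]
  refine Finset.sum_congr rfl fun i hi => ?_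
  have hi' : i ∉ τ := (Finset.mem_sdiff.1 hi).2
  have := hc (insert i τ) i (by simp)
  rw [Finset.erase_insert hi'] at this
  rw [← this]
  ring

lemma ev_ext (p : ℕ) (f g : TaylorMod k n m p) (h : ∀ σ, σ.card = p → ev p f σ = ev p g σ) :
    f = g := by
  ext1 ⟨σ, hσ⟩
  have := h σ hσ
  simpa [ev, hσ] using this

lemma aug_eq (f : TaylorMod k n m 0) : taylorAug k n m f = ev 0 f ∅ := by
  induction f using Finsupp.induction_linear with
  | zero => simp [ev]
  | add f g hf hg => rw [map_add, hf, hg, ev_add]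
  | single σ a =>
    rw [ev_single]
    have : ∅ = σ.1 := (Finset.card_eq_zero.1 σ.2).symm
    simp [taylorAug, this]

end Final

end TaylorAux

/-- Assume `k` algebraically closed and `m ≤ n`.  Let `E` be a generic
set of pairwise non-proportional homogeneous linear forms (any subset of at most `n`
elements is linearly independent) and suppose each `Q j` is a product of powers of
elements of `E`.  Then the Taylor complex of `𝒜` is a resolution of `S/I`. -/
theorem taylor_resolution_of_generic_linear_products (k : Type) [Field k] [IsAlgClosed k]
    (n m : ℕ) (hmn : m ≤ n)
    (Q : Fin m → MvPolynomial (Fin n) k)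
    (hQ0 : ∀ i, Q i ≠ 0)
    (hQhom : ∀ i, ∃ d, (Q i).IsHomogeneous d)
    (hQdvd : ∀ i j, i ≠ j → ¬ Q i ∣ Q j)
    (L : Finset (Fin m) → MvPolynomial (Fin n) k)
    (hLdvd : ∀ σ, ∀ i ∈ σ, Q i ∣ L σ)
    (hLlcm : ∀ σ t, (∀ i ∈ σ, Q i ∣ t) → L σ ∣ t)
    (c : Finset (Fin m) → Fin m → MvPolynomial (Fin n) k)
    (hc : ∀ σ, ∀ i ∈ σ, c σ i * L (σ.erase i) = L σ)
    (E : Finset (MvPolynomial (Fin n) k))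
    (hElin : ∀ z ∈ E, MvPolynomial.IsHomogeneous z 1)
    (hE0 : ∀ z ∈ E, z ≠ 0)
    (hEprop : ∀ z ∈ E, ∀ w ∈ E, z ≠ w → ∀ a : k, z ≠ a • w)
    (hEgen : ∀ s ⊆ E, s.card ≤ n →
      LinearIndependent k (fun z : s => (z : MvPolynomial (Fin n) k)))
    (hQprod : ∀ j, ∃ e : MvPolynomial (Fin n) k → ℕ, Q j = ∏ z ∈ E, z ^ e z) :
    IsTaylorResolution k n m Q c := by
  classical
  choose e0 he0 using hQprod
  set z : MvPolynomial (Fin n) k → MvPolynomial (Fin n) k := fun x => x with hz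
  have hR : TaylorAux.Reg z E n := TaylorAux.reg_linear k n E hElin hEgen
  have hQm : ∀ j, Q j = TaylorAux.mon z E (e0 j) := he0
  have hcardm : ∀ σ : Finset (Fin m), σ.card ≤ n := fun σ =>
    (Finset.card_le_univ σ).trans (by simpa using hmn)
  have hL0 : ∀ σ, L σ ≠ 0 := by
    intro σ h
    have h1 := hLlcm σ (∏ i ∈ σ, Q i) (fun i hi => Finset.dvd_prod_of_mem Q hi)
    rw [h, zero_dvd_iff] at h1
    exact Finset.prod_ne_zero_iff.2 (fun i _ => hQ0 i) h1
  have hLd : ∀ σ, L σ ∣ TaylorAux.mon z E (σ.sup e0) := by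
    intro σ
    refine hLlcm σ _ fun i hi => ?_
    rw [hQm]
    exact TaylorAux.mon_dvd z E (Finset.le_sup hi)
  have hdl : ∀ (σ : Finset (Fin m)) (t : MvPolynomial (Fin n) k),
      (∀ i ∈ σ, TaylorAux.mon z E (e0 i) ∣ t) → TaylorAux.mon z E (σ.sup e0) ∣ t := by
    intro σ
    induction σ using Finset.induction_on with
    | empty =>
      intro t _
      rw [Finset.sup_empty]
      change TaylorAux.mon z E 0 ∣ t
      rw [TaylorAux.mon_zero]
      exact one_dvd _
    | insert l σ hl ih =>
      intro t ht
      rcases σ.eq_empty_or_nonempty with rfl | hne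
      · simpa using ht l (by simp)
      have hn2 : 2 ≤ n := by
        have h1 := hcardm (insert l σ)
        rw [Finset.card_insert_of_notMem hl] at h1
        have := hne.card_pos
        omega
      obtain ⟨w, hw1, hw2⟩ := TaylorAux.distrib z E n hR ({()} : Finset Unit)
        (by simpa using hn2) (fun _ => σ.sup e0) (e0 l) t (ht l (by simp)) (fun _ => t)
        (fun _ _ => ih t fun i hi => ht i (Finset.mem_insert_of_mem hi)) (by simp)
      rw [hw2, Finset.sup_insert]
      simpa using hw1 ()
  have hdL : ∀ σ, TaylorAux.mon z E (σ.sup e0) ∣ L σ := fun σ =>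
    hdl σ _ fun i hi => by rw [← hQm]; exact hLdvd σ i hi
  have hbot : ∀ σ : Finset (Fin m), (0 : MvPolynomial (Fin n) k → ℕ) ⊔ σ.sup e0 = σ.sup e0 :=
    fun σ => bot_sup_eq (σ.sup e0)
  refine ⟨?_, ?_⟩
  · intro p hp
    obtain ⟨q, rfl⟩ : ∃ q, p = q + 1 := ⟨p - 1, by omega⟩
    apply le_antisymm
    · intro x hx
      rw [LinearMap.mem_ker] at hx
      obtain ⟨h, hh1, hh2⟩ := TaylorAux.exact_aux z E n hR e0 univ (hcardm _) 0
        (fun σ => L σ * TaylorAux.ev (q + 1) x σ)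
        (fun σ _ => by rw [hbot]; exact Dvd.dvd.mul_right (hdL σ) _)
        (fun τ _ => by
          rw [← TaylorAux.key_bd L c hc q x τ, hx]
          simp [TaylorAux.ev])
        (by simp [TaylorAux.ev])
      have hw : ∀ σ, ∃ w, h σ = L σ * w := fun σ =>
        (hLd σ).trans (by simpa only [hbot] using hh1 σ (Finset.subset_univ _))
      choose w hw using hw
      refine ⟨Finsupp.equivFunOnFinite.symm fun σ => w σ.1, ?_⟩
      apply TaylorAux.ev_ext (q + 1)
      intro τ hτ
      apply mul_left_cancel₀ (hL0 τ)
      refine Eq.trans (TaylorAux.key_bd L c hc (q + 1) _ τ) ?_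
      rw [← hh2 τ (Finset.subset_univ _)]
      unfold TaylorAux.bd
      refine Finset.sum_congr rfl fun i hi => ?_
      have hcard : (insert i τ).card = q + 1 + 1 := by
        rw [Finset.card_insert_of_notMem (Finset.mem_sdiff.1 hi).2, hτ]
      rw [hw]
      simp [TaylorAux.ev, hcard]
    · rintro _ ⟨y, rfl⟩
      rw [LinearMap.mem_ker]
      apply TaylorAux.ev_ext q
      intro τ hτ
      apply mul_left_cancel₀ (hL0 τ)
      refine Eq.trans (TaylorAux.key_bd L c hc q _ τ) ?_
      have h1 : (fun σ => L σ * TaylorAux.ev (q + 1) (taylorD k n m c (q + 1 + 1) y) σ)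
          = TaylorAux.bd univ (fun σ => L σ * TaylorAux.ev (q + 1 + 1) y σ) := by
        funext σ
        exact TaylorAux.key_bd L c hc (q + 1) y σ
      refine Eq.trans (congrArg (fun g => TaylorAux.bd univ g τ) h1) ?_
      rw [TaylorAux.bd_bd _ _ _ (Finset.subset_univ _)]
      simp [TaylorAux.ev]
  · have hu : IsUnit (L ∅) := isUnit_of_dvd_one (hLlcm ∅ 1 (by simp))
    have haug : ∀ y : TaylorMod k n m 1, L ∅ * taylorAug k n m (taylorD k n m c 1 y)
        = ∑ i, L {i} * TaylorAux.ev 1 y {i} := by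
      intro y
      have h1 := TaylorAux.key_bd L c hc 0 y ∅
      refine Eq.trans (congrArg (fun g => L ∅ * g) (TaylorAux.aug_eq _)) (h1.trans ?_)
      simp [TaylorAux.bd]
    apply le_antisymm
    · rintro _ ⟨_, ⟨y, rfl⟩, rfl⟩
      rw [← Ideal.unit_mul_mem_iff_mem _ hu, haug]
      refine sum_mem fun i _ => Ideal.mul_mem_right _ _ ?_
      exact Ideal.mem_of_dvd _ (hLdvd {i} i (by simp)) (Ideal.subset_span ⟨i, rfl⟩)
    · refine Submodule.span_le.2 ?_
      rintro _ ⟨i, rfl⟩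
      obtain ⟨v, hv⟩ := hLlcm {i} (Q i * L ∅) (by simp)
      refine ⟨_, ⟨Finsupp.single ⟨{i}, by simp⟩ v, rfl⟩, ?_⟩
      apply mul_left_cancel₀ (hL0 ∅)
      rw [haug]
      simp only [TaylorAux.ev_single, Finset.singleton_inj]
      rw [Finset.sum_eq_single i]
      · rw [if_pos rfl, ← hv, mul_comm]
      · intro j _ hj
        rw [if_neg hj, mul_zero]
      · simp
end
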